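/- arXiv:2205.14855 — 2 statements merged into one kernel-verified Lean document; each statement's English description precedes it below -/
import Mathlib

section
/- Let ẑ be the spectral clustering with r = κ components. Assume βn/k² ≥ 10, ρ₀ := λ_κ/‖E‖ > 16, and ψ₀ := Δ/(β^{−1/2} k n^{−1/2} ‖E‖) ≥ 16, and let φ be the bijection of [k] with ℓ(ẑ,z*) = (1/n)|{i : ẑ_i ≠ φ(z*_i)}|. Then there is a universal constant C > 0 such that for every i ∈ [n]: 𝟙{ẑ_i ≠ φ(z*_i)} ≤ 𝟙{ (1 − C(ψ₀^{−1} + ρ₀^{−2})) Δ ≤ 2‖Û_{−i,1:κ} Û_{−i,1:κ}ᵀ ε_i‖ }. Consequently, if the ε_i are random, E ℓ(ẑ,z*) ≤ n^{−1} Σ_{i∈[n]} P( (1 − C(ψ₀^{−1} + ρ₀^{−2})) Δ ≤ 2‖Û_{−i,1:κ} Û_{−i,1:κ}ᵀ ε_i‖ ). -/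
open Matrix MeasureTheory ProbabilityTheory
open scoped BigOperators ENNReal NNReal

noncomputable section

/-- Euclidean norm of a vector in `Fin p → ℝ`. -/
def vnorm {p : ℕ} (x : Fin p → ℝ) : ℝ := Real.sqrt (∑ i, (x i) ^ 2)

/-- Frobenius norm of a real matrix. -/
def fnorm {m n : ℕ} (A : Matrix (Fin m) (Fin n) ℝ) : ℝ :=
  Real.sqrt (∑ i, ∑ j, (A i j) ^ 2)

/-- Operator (spectral) norm of a real matrix. -/
def opnorm {m n : ℕ} (A : Matrix (Fin m) (Fin n) ℝ) : ℝ :=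
  ‖LinearMap.toContinuousLinearMap (Matrix.toEuclideanLin A)‖

/-- A (full) singular value decomposition of a real `p × n` matrix `A`:
`A = U D Vᵀ` with `U, V` orthogonal and `D` the rectangular diagonal matrix with the
nonincreasing nonnegative singular values `sv 0 ≥ sv 1 ≥ ⋯` on the diagonal
(0-indexed, so the math `σ_i` is `sv (i-1)`), extended by zero beyond `min p n`. -/
structure SVDData (p n : ℕ) (A : Matrix (Fin p) (Fin n) ℝ) where
  U : Matrix (Fin p) (Fin p) ℝ
  V : Matrix (Fin n) (Fin n) ℝ
  sv : ℕ → ℝ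
  hU : Uᵀ * U = 1
  hV : Vᵀ * V = 1
  sv_anti : ∀ i j : ℕ, i ≤ j → sv j ≤ sv i
  sv_nonneg : ∀ i, 0 ≤ sv i
  sv_zero : ∀ j, min p n ≤ j → sv j = 0
  decomp : A = U * (Matrix.of fun (i : Fin p) (j : Fin n) => if (i : ℕ) = (j : ℕ) then sv (i : ℕ) else 0) * Vᵀ

/-- Projection matrix `U_{1:r} U_{1:r}ᵀ` onto the span of the first `r` columns of `U`. -/
def projr {p : ℕ} (U : Matrix (Fin p) (Fin p) ℝ) (r : ℕ) : Matrix (Fin p) (Fin p) ℝ :=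
  Matrix.of fun i j => ∑ l : Fin p, if (l : ℕ) < r then U i l * U j l else 0

/-- The `l`-th (0-indexed) column of a matrix, as a vector. -/
def matCol {p q : ℕ} (U : Matrix (Fin p) (Fin q) ℝ) (l : ℕ) : Fin p → ℝ :=
  fun i => if h : l < q then U i ⟨l, h⟩ else 0

/-- `β` for a cluster assignment: `(k/n) ·` (size of the smallest cluster),
so that `β·n/k` is the size of the smallest cluster. -/
def betaMin (n k : ℕ) (z : Fin n → Fin k) : ℝ :=
  ((k : ℝ) / n) * ⨅ a : Fin k, ((Finset.univ.filter fun i => z i = a).card : ℝ)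

/-- Minimum pairwise distance between the centers. -/
def Delta {p k : ℕ} (θ : Fin k → Fin p → ℝ) : ℝ :=
  ⨅ q : {q : Fin k × Fin k // q.1 ≠ q.2}, vnorm (fun i => θ q.1.1 i - θ q.1.2 i)

/-- Misclustering error `ℓ(z, z*)`. -/
def miscl {n k : ℕ} (z zs : Fin n → Fin k) : ℝ :=
  (⨅ φ : Equiv.Perm (Fin k), ((Finset.univ.filter fun i => z i ≠ φ (zs i)).card : ℝ)) / n

/-- `(z, c)` is a global minimizer of the k-means objective for the columns of `W * X`. -/
def IsKMeans {p n k : ℕ} (W : Matrix (Fin p) (Fin p) ℝ) (X : Matrix (Fin p) (Fin n) ℝ)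
    (z : Fin n → Fin k) (c : Fin k → Fin p → ℝ) : Prop :=
  ∀ (z' : Fin n → Fin k) (c' : Fin k → Fin p → ℝ),
    ∑ i, ∑ a, (W.mulVec (fun b => X b i) a - c (z i) a) ^ 2 ≤
      ∑ i, ∑ a, (W.mulVec (fun b => X b i) a - c' (z' i) a) ^ 2



namespace LOO

abbrev H (p : ℕ) := EuclideanSpace ℝ (Fin p)

/-- projection onto first κ vectors -/
def W {p : ℕ} (u : OrthonormalBasis (Fin p) ℝ (H p)) (κ : ℕ) : H p →ₗ[ℝ] H p :=
  ∑ l : Fin p, if (l : ℕ) < κ then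
    (LinearMap.toSpanSingleton ℝ (H p) (u l)).comp (innerSL ℝ (u l)).toLinearMap else 0

lemma W_apply {p : ℕ} (u : OrthonormalBasis (Fin p) ℝ (H p)) (κ : ℕ) (x : H p) :
    W u κ x = ∑ l : Fin p, if (l : ℕ) < κ then inner ℝ (u l) x • u l else 0 := by
  simp only [W, LinearMap.sum_apply]
  refine Finset.sum_congr rfl fun l _ => ?_
  split_ifs <;> simp

lemma inner_W {p : ℕ} (u : OrthonormalBasis (Fin p) ℝ (H p)) (κ : ℕ) (x : H p) (l : Fin p) :
    inner ℝ (u l) (W u κ x) = if (l : ℕ) < κ then inner ℝ (u l) x else 0 := by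
  rw [W_apply, inner_sum, Finset.sum_eq_single l]
  · split_ifs <;> simp [inner_smul_right]
  · intro b _ hb
    split_ifs
    · rw [inner_smul_right, u.inner_eq_zero hb.symm, mul_zero]
    · simp
  · simp

lemma parseval {p : ℕ} (u : OrthonormalBasis (Fin p) ℝ (H p)) (x : H p) :
    ‖x‖ ^ 2 = ∑ l, (inner ℝ (u l) x) ^ 2 := (u.sum_sq_inner_right x).symm

lemma norm_W_sq {p : ℕ} (u : OrthonormalBasis (Fin p) ℝ (H p)) (κ : ℕ) (x : H p) :
    ‖W u κ x‖ ^ 2 = ∑ l : Fin p, if (l : ℕ) < κ then (inner ℝ (u l) x) ^ 2 else 0 := by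
  rw [parseval u]
  refine Finset.sum_congr rfl fun l _ => ?_
  rw [inner_W]; split_ifs <;> simp

lemma norm_W_le {p : ℕ} (u : OrthonormalBasis (Fin p) ℝ (H p)) (κ : ℕ) (x : H p) :
    ‖W u κ x‖ ≤ ‖x‖ := by
  refine le_of_sq_le_sq ?_ (norm_nonneg _)
  rw [norm_W_sq, parseval u]
  refine Finset.sum_le_sum fun l _ => ?_
  split_ifs
  · exact le_rfl
  · positivity

lemma norm_subW_le {p : ℕ} (u : OrthonormalBasis (Fin p) ℝ (H p)) (κ : ℕ) (x : H p) :
    ‖x - W u κ x‖ ≤ ‖x‖ := by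
  refine le_of_sq_le_sq ?_ (norm_nonneg _)
  rw [parseval u, parseval u x]
  refine Finset.sum_le_sum fun l _ => ?_
  rw [inner_sub_right, inner_W]
  split_ifs
  · simp; positivity
  · simp

structure SV {p q : ℕ} (x : Fin q → H p) (u : OrthonormalBasis (Fin p) ℝ (H p))
    (v : OrthonormalBasis (Fin q) ℝ (H q)) (s : ℕ → ℝ) : Prop where
  anti : ∀ i j : ℕ, i ≤ j → s j ≤ s i
  nonneg : ∀ i, 0 ≤ s i
  zero : ∀ j, min p q ≤ j → s j = 0
  uv : ∀ (l : Fin p) (y : H q), inner ℝ (u l) (∑ j, y j • x j) =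
    s l * (if h : (l : ℕ) < q then inner ℝ (v ⟨l, h⟩) y else 0)
  gram : ∀ a b : H p, ∑ j, inner ℝ (x j) a * inner ℝ (x j) b =
    ∑ l : Fin p, s l ^ 2 * (inner ℝ (u l) a * inner ℝ (u l) b)

/-- coordinates -/
def gg {p q : ℕ} (v : OrthonormalBasis (Fin q) ℝ (H q)) (y : H q) (l : Fin p) : ℝ :=
  if h : (l : ℕ) < q then inner ℝ (v ⟨l, h⟩) y else 0

lemma sum_gg_le {p q : ℕ} (v : OrthonormalBasis (Fin q) ℝ (H q)) (y : H q) :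
    ∑ l : Fin p, (gg v y l) ^ 2 ≤ ‖y‖ ^ 2 := by
  rw [parseval v]
  have h1 : ∑ l : Fin p, (gg v y l) ^ 2 =
      ∑ l ∈ Finset.range p, if h : l < q then (inner ℝ (v ⟨l, h⟩) y) ^ 2 else 0 := by
    rw [Finset.sum_range]
    refine Finset.sum_congr rfl fun l _ => ?_
    unfold gg; split_ifs <;> simp
  have h2 : ∑ l : Fin q, (inner ℝ (v l) y) ^ 2 =
      ∑ l ∈ Finset.range q, if h : l < q then (inner ℝ (v ⟨l, h⟩) y) ^ 2 else 0 := by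
    rw [Finset.sum_range]
    refine Finset.sum_congr rfl fun l _ => ?_
    simp
  rw [h1, h2]
  rw [← Finset.sum_filter_add_sum_filter_not (Finset.range p) (fun l => l < q)]
  have h3 : ∑ l ∈ (Finset.range p).filter (fun l => ¬ l < q),
      (if h : l < q then (inner ℝ (v ⟨l, h⟩) y) ^ 2 else 0) = 0 := by
    refine Finset.sum_eq_zero fun l hl => ?_
    simp only [Finset.mem_filter] at hl
    rw [dif_neg hl.2]
  rw [h3, add_zero]
  refine Finset.sum_le_sum_of_subset_of_nonneg ?_ ?_
  · intro l hl; simp only [Finset.mem_filter, Finset.mem_range] at hl ⊢; exact hl.2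
  · intro l _ _; split_ifs <;> positivity

lemma sum_gg_eq {p q j : ℕ} (v : OrthonormalBasis (Fin q) ℝ (H q)) (y : H q) (hp : j < p)
    (hz : ∀ l : Fin q, j < (l : ℕ) → inner ℝ (v l) y = 0) :
    ‖y‖ ^ 2 ≤ ∑ l : Fin p, (gg v y l) ^ 2 := by
  rw [parseval v]
  have h1 : ∑ l : Fin p, (gg v y l) ^ 2 =
      ∑ l ∈ Finset.range p, if h : l < q then (inner ℝ (v ⟨l, h⟩) y) ^ 2 else 0 := by
    rw [Finset.sum_range]
    refine Finset.sum_congr rfl fun l _ => ?_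
    unfold gg; split_ifs <;> simp
  have h2 : ∑ l : Fin q, (inner ℝ (v l) y) ^ 2 =
      ∑ l ∈ Finset.range q, if h : l < q then (inner ℝ (v ⟨l, h⟩) y) ^ 2 else 0 := by
    rw [Finset.sum_range]
    refine Finset.sum_congr rfl fun l _ => ?_
    simp
  rw [h1, h2]
  rw [← Finset.sum_filter_add_sum_filter_not (Finset.range q) (fun l => l < p)]
  have h3 : ∑ l ∈ (Finset.range q).filter (fun l => ¬ l < p),
      (if h : l < q then (inner ℝ (v ⟨l, h⟩) y) ^ 2 else 0) = 0 := by
    refine Finset.sum_eq_zero fun l hl => ?_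
    simp only [Finset.mem_filter, Finset.mem_range] at hl
    rw [dif_pos hl.1, hz _ (by simp; omega)]; simp
  rw [h3, add_zero]
  refine Finset.sum_le_sum_of_subset_of_nonneg ?_ ?_
  · intro l hl; simp only [Finset.mem_filter, Finset.mem_range] at hl ⊢; exact hl.2
  · intro l _ _; split_ifs <;> positivity

section
variable {p q : ℕ} {x : Fin q → H p} {u : OrthonormalBasis (Fin p) ℝ (H p)}
    {v : OrthonormalBasis (Fin q) ℝ (H q)} {s : ℕ → ℝ}

lemma SV.sub_le (h : SV x u v s) (κ : ℕ) (y : H q) :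
    ‖(∑ j, y j • x j) - W u κ (∑ j, y j • x j)‖ ≤ s κ * ‖y‖ := by
  refine le_of_sq_le_sq ?_ (mul_nonneg (h.nonneg _) (norm_nonneg _))
  rw [parseval u, mul_pow]
  calc _ ≤ ∑ l : Fin p, s κ ^ 2 * (gg v y l) ^ 2 := by
        refine Finset.sum_le_sum fun l _ => ?_
        rw [inner_sub_right, inner_W]
        split_ifs with hl
        · simp; positivity
        · rw [sub_zero, h.uv, mul_pow]
          exact mul_le_mul_of_nonneg_right
            (pow_le_pow_left₀ (h.nonneg _) (h.anti _ _ (not_lt.1 hl)) 2) (sq_nonneg _)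
    _ ≤ _ := by
        rw [← Finset.mul_sum]
        exact mul_le_mul_of_nonneg_left (sum_gg_le v y) (sq_nonneg _)

lemma SV.weyl (h : SV x u v s) (j : ℕ) (t : ℝ) (ht : 0 ≤ t) (f : H q →ₗ[ℝ] (Fin j → ℝ))
    (hf : ∀ y, f y = 0 → ‖∑ i, y i • x i‖ ≤ t * ‖y‖) : s j ≤ t := by
  by_cases hj : min p q ≤ j
  · rw [h.zero j hj]; exact ht
  have hjp : j < p := by omega
  have hjq : j < q := by omega
  let g : H q →ₗ[ℝ] (Fin (q - j - 1) → ℝ) :=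
    LinearMap.pi fun l => (innerSL ℝ (v ⟨j + 1 + l, by omega⟩)).toLinearMap
  have hk : LinearMap.ker (f.prod g) ≠ ⊥ := by
    apply LinearMap.ker_ne_bot_of_finrank_lt
    simp; omega
  obtain ⟨y, hy, hy0⟩ := (Submodule.ne_bot_iff _).1 hk
  replace hy : f y = 0 ∧ g y = 0 := by simpa using hy
  have hz : ∀ l : Fin q, j < (l : ℕ) → inner ℝ (v l) y = 0 := by
    intro l hl
    have := congrFun hy.2 ⟨l - j - 1, by omega⟩
    simp only [g, LinearMap.pi_apply] at this
    have e : (⟨j + 1 + (l - j - 1), by omega⟩ : Fin q) = l := by ext; simp; omega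
    rw [e] at this
    simpa using this
  have h1 := hf y hy.1
  have h2 : (s j * ‖y‖) ≤ ‖∑ i, y i • x i‖ := by
    refine le_of_sq_le_sq ?_ (norm_nonneg _)
    rw [mul_pow, parseval u]
    calc _ ≤ s j ^ 2 * ∑ l : Fin p, (gg v y l) ^ 2 :=
          mul_le_mul_of_nonneg_left (sum_gg_eq v y hjp hz) (sq_nonneg _)
      _ ≤ _ := by
          rw [Finset.mul_sum]
          refine Finset.sum_le_sum fun l _ => ?_
          rw [h.uv, mul_pow]
          by_cases hl : (l : ℕ) ≤ j
          · exact mul_le_mul_of_nonneg_right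
              (pow_le_pow_left₀ (h.nonneg _) (h.anti _ _ hl) 2) (sq_nonneg _)
          · have : gg v y l = 0 := by
              unfold gg; split_ifs with hq
              · exact hz _ (by simpa using hl)
              · rfl
            rw [this]; simp only [ne_eq, OfNat.ofNat_ne_zero, not_false_eq_true, zero_pow, mul_zero]
            exact mul_nonneg (sq_nonneg _) (sq_nonneg _)
  have hy1 : 0 < ‖y‖ := norm_pos_iff.2 hy0
  exact le_of_mul_le_mul_right (h2.trans h1) hy1

/-- vectors orthogonal to the first j right singular vectors -/
lemma SV.tail_le (h : SV x u v s) (j : ℕ) (y : H q)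
    (hy : ∀ l : Fin q, (l : ℕ) < j → inner ℝ (v l) y = 0) :
    ‖∑ i, y i • x i‖ ≤ s j * ‖y‖ := by
  refine le_of_sq_le_sq ?_ (mul_nonneg (h.nonneg _) (norm_nonneg _))
  rw [parseval u, mul_pow]
  calc _ ≤ ∑ l : Fin p, s j ^ 2 * (gg v y l) ^ 2 := by
        refine Finset.sum_le_sum fun l _ => ?_
        rw [h.uv, mul_pow]
        by_cases hl : (l : ℕ) < j
        · have : gg v y l = 0 := by
            unfold gg; split_ifs with hq
            · exact hy _ (by simpa using hl)
            · rfl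
          unfold gg at this
          rw [this]; simp; positivity
        · exact mul_le_mul_of_nonneg_right
            (pow_le_pow_left₀ (h.nonneg _) (h.anti _ _ (not_lt.1 hl)) 2) (sq_nonneg _)
    _ ≤ _ := by
        rw [← Finset.mul_sum]
        exact mul_le_mul_of_nonneg_left (sum_gg_le v y) (sq_nonneg _)

/-- functional extracting the first j right coordinates -/
def ff (v : OrthonormalBasis (Fin q) ℝ (H q)) (j : ℕ) : H q →ₗ[ℝ] (Fin j → ℝ) :=
  LinearMap.pi fun l => if h : (l : ℕ) < q then (innerSL ℝ (v ⟨l, h⟩)).toLinearMap else 0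

lemma ff_zero {v : OrthonormalBasis (Fin q) ℝ (H q)} {j : ℕ} {y : H q} (h : ff v j y = 0)
    (l : Fin q) (hl : (l : ℕ) < j) : inner ℝ (v l) y = 0 := by
  have := congrFun h ⟨l, hl⟩
  simpa [ff] using this

/-- Weyl for two matrices -/
lemma SV.weyl2 (h : SV x u v s) {x' : Fin q → H p} {u' : OrthonormalBasis (Fin p) ℝ (H p)}
    {v' : OrthonormalBasis (Fin q) ℝ (H q)} {s' : ℕ → ℝ} (h' : SV x' u' v' s') (ε : ℝ)
    (hε : 0 ≤ ε) (hE : ∀ y : H q, ‖∑ i, y i • (x i - x' i)‖ ≤ ε * ‖y‖) (j : ℕ) :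
    s j ≤ s' j + ε := by
  refine h.weyl j _ (add_nonneg (h'.nonneg _) hε) (ff v' j) fun y hy => ?_
  have e : ∑ i, y i • x i = ∑ i, y i • x' i + ∑ i, y i • (x i - x' i) := by
    rw [← Finset.sum_add_distrib]
    refine Finset.sum_congr rfl fun i _ => ?_
    rw [← smul_add]; simp
  rw [e, add_mul]
  exact (norm_add_le _ _).trans (add_le_add (h'.tail_le j y (ff_zero hy)) (hE y))

end

section noise
variable {p q : ℕ} {e : Fin q → H p} {ε : ℝ}

lemma noise_col (hE : ∀ y : H q, ‖∑ i, y i • e i‖ ≤ ε * ‖y‖) (i : Fin q) : ‖e i‖ ≤ ε := by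
  have := hE (EuclideanSpace.single i 1)
  simpa [Pi.single_apply] using this

lemma noise_row (h0 : 0 ≤ ε) (hE : ∀ y : H q, ‖∑ i, y i • e i‖ ≤ ε * ‖y‖) (w : H p) :
    ∑ i, (inner ℝ w (e i)) ^ 2 ≤ ε ^ 2 * ‖w‖ ^ 2 := by
  set y : H q := WithLp.toLp 2 fun i => inner ℝ w (e i) with hy
  have h1 : ‖y‖ ^ 2 = ∑ i, (inner ℝ w (e i)) ^ 2 := by
    rw [EuclideanSpace.norm_sq_eq]; simp [hy]
  have h2 : inner ℝ w (∑ i, y i • e i) = ‖y‖ ^ 2 := by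
    rw [h1, inner_sum]
    refine Finset.sum_congr rfl fun i _ => ?_
    rw [inner_smul_right, hy]; simp [sq]
  have h3 : ‖y‖ ^ 2 ≤ ‖w‖ * (ε * ‖y‖) := by
    rw [← h2]
    exact (real_inner_le_norm _ _).trans (mul_le_mul_of_nonneg_left (hE y) (norm_nonneg _))
  rw [← h1, ← mul_pow]
  have h4 : ‖y‖ ≤ ε * ‖w‖ := by
    by_cases h : ‖y‖ = 0
    · rw [h]; positivity
    · have : 0 < ‖y‖ := lt_of_le_of_ne (norm_nonneg _) (Ne.symm h)
      nlinarith
  exact pow_le_pow_left₀ (norm_nonneg _) h4 2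

lemma noise_W (h0 : 0 ≤ ε) (hE : ∀ y : H q, ‖∑ i, y i • e i‖ ≤ ε * ‖y‖)
    (u : OrthonormalBasis (Fin p) ℝ (H p)) (κ : ℕ) :
    ∑ i, ‖W u κ (e i)‖ ^ 2 ≤ κ * ε ^ 2 := by
  simp_rw [norm_W_sq]
  rw [Finset.sum_comm]
  calc _ ≤ ∑ l : Fin p, if (l : ℕ) < κ then ε ^ 2 else 0 := by
        refine Finset.sum_le_sum fun l _ => ?_
        split_ifs
        · have := noise_row h0 hE (u l)
          simpa using this
        · simp
    _ ≤ _ := by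
        rw [← Finset.sum_filter, Finset.sum_const, nsmul_eq_mul]
        refine mul_le_mul_of_nonneg_right ?_ (sq_nonneg _)
        have : (Finset.univ.filter fun l : Fin p => (l : ℕ) < κ).card ≤ κ := by
          calc _ ≤ (Finset.range κ).card := by
                refine Finset.card_le_card_of_injOn (fun l => (l : ℕ)) ?_ ?_
                · intro l hl; simpa using hl
                · intro a _ b _ h; exact Fin.ext h
            _ = κ := by simp
        exact_mod_cast this

end noise

section loo
variable {p n k : ℕ}

/-- cluster indicator -/
def ind (z : Fin n → Fin k) (a : Fin k) : H n := WithLp.toLp 2 fun i => if z i = a then 1 else 0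

def csz (z : Fin n → Fin k) (a : Fin k) : ℝ := ((Finset.univ.filter fun i => z i = a).card : ℝ)

lemma ind_sq (z : Fin n → Fin k) (a : Fin k) : ‖ind z a‖ ^ 2 = csz z a := by
  rw [EuclideanSpace.norm_sq_eq]; simp [ind, csz]

lemma ind_sum {z : Fin n → Fin k} {θ : Fin k → H p} {x e : Fin n → H p}
    (hx : ∀ j, x j = θ (z j) + e j) (a : Fin k) :
    ∑ j, ind z a j • x j = csz z a • θ a + ∑ j, ind z a j • e j := by
  have : ∑ j, ind z a j • θ (z j) = csz z a • θ a := by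
    calc _ = ∑ j, if z j = a then θ a else 0 := by
          refine Finset.sum_congr rfl fun j _ => ?_
          by_cases h : z j = a <;> simp [ind, h]
      _ = _ := by
          rw [← Finset.sum_filter, Finset.sum_const, csz, Nat.cast_smul_eq_nsmul]
  rw [← this, ← Finset.sum_add_distrib]
  refine Finset.sum_congr rfl fun j _ => ?_
  rw [hx, smul_add]

lemma theta_sub {z : Fin n → Fin k} {θ : Fin k → H p} {x e : Fin n → H p} {ε : ℝ}
    (hx : ∀ j, x j = θ (z j) + e j) (hε : 0 ≤ ε)
    (hE : ∀ y : H n, ‖∑ i, y i • e i‖ ≤ ε * ‖y‖)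
    {u : OrthonormalBasis (Fin p) ℝ (H p)} {v : OrthonormalBasis (Fin n) ℝ (H n)} {s : ℕ → ℝ}
    (hS : SV x u v s) {κ : ℕ} (hs : s κ ≤ ε) (a : Fin k) :
    csz z a * ‖θ a - W u κ (θ a)‖ ^ 2 ≤ 4 * ε ^ 2 := by
  set y := ind z a with hy
  set M := csz z a with hM
  have hM0 : 0 ≤ M := by rw [hM, csz]; positivity
  have h1 := ind_sum hx a
  have h2 : M • (θ a - W u κ (θ a)) = ((∑ j, y j • x j) - W u κ (∑ j, y j • x j))
      - ((∑ j, y j • e j) - W u κ (∑ j, y j • e j)) := by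
    rw [h1, map_add, map_smul, smul_sub]; abel
  have h3 : ‖M • (θ a - W u κ (θ a))‖ ≤ 2 * ε * ‖y‖ := by
    rw [h2]
    have i1 := hS.sub_le κ y
    have i2 := (norm_subW_le u κ (∑ j, y j • e j)).trans (hE y)
    have i3 := mul_le_mul_of_nonneg_right hs (norm_nonneg y)
    have := norm_sub_le ((∑ j, y j • x j) - W u κ (∑ j, y j • x j))
      ((∑ j, y j • e j) - W u κ (∑ j, y j • e j))
    linarith
  rw [norm_smul, Real.norm_eq_abs, abs_of_nonneg hM0] at h3
  set t := ‖θ a - W u κ (θ a)‖ with ht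
  have ht0 : 0 ≤ t := norm_nonneg _
  have h4 : (M * t) ^ 2 ≤ (2 * ε * ‖y‖) ^ 2 := pow_le_pow_left₀ (by positivity) h3 2
  have h5 : ‖y‖ ^ 2 = M := ind_sq z a
  rw [mul_pow, mul_pow, mul_pow, h5] at h4
  rcases hM0.eq_or_lt with h | h
  · rw [← h]; nlinarith [sq_nonneg ε]
  · by_contra hc
    push Not at hc
    nlinarith [mul_lt_mul_of_pos_left hc h]

lemma V_bound {z : Fin n → Fin k} {θ : Fin k → H p} {x e : Fin n → H p} {ε : ℝ}
    (hx : ∀ j, x j = θ (z j) + e j)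
    (hE : ∀ y : H n, ‖∑ i, y i • e i‖ ≤ ε * ‖y‖)
    {u : OrthonormalBasis (Fin p) ℝ (H p)} {v : OrthonormalBasis (Fin n) ℝ (H n)} {s : ℕ → ℝ}
    (hS : SV x u v s) {κ : ℕ} (σ : ℝ) (hσ : 0 < σ) (hs : ∀ l, l < κ → σ ≤ s l)
    (i : Fin n) :
    ∑ l : Fin p, (if (l : ℕ) < κ then (gg v (EuclideanSpace.single i 1) l) ^ 2 else 0) ≤
      3 * (1 / csz z (z i) + ε ^ 2 / (σ ^ 2 * csz z (z i)) + ‖W u κ (e i)‖ ^ 2 / σ ^ 2) := by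
  set y := ind z (z i) with hy
  set M := csz z (z i) with hM
  have hM0 : 0 < M := by
    rw [hM, csz]
    exact_mod_cast Finset.card_pos.2 ⟨i, by simp⟩
  have h5 : ‖y‖ ^ 2 = M := ind_sq z (z i)
  have h1 := ind_sum hx (z i)
  set w := ∑ j, y j • e j with hw
  have hwM : ‖w‖ ^ 2 ≤ ε ^ 2 * M := by
    have := pow_le_pow_left₀ (norm_nonneg _) (hE y) 2
    rwa [mul_pow, h5] at this
  have key : ∀ l : Fin p, (l : ℕ) < κ → (gg v (EuclideanSpace.single i 1) l) ^ 2 ≤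
      3 * ((gg v y l) ^ 2 / M ^ 2 + (inner ℝ (u l) w) ^ 2 / (σ ^ 2 * M ^ 2) +
        (inner ℝ (u l) (e i)) ^ 2 / σ ^ 2) := by
    intro l hl
    have hsl := hs l hl
    have hsl0 : 0 < s l := hσ.trans_le hsl
    have a1 : inner ℝ (u l) (x i) = s l * gg v (EuclideanSpace.single i 1) l := by
      have := hS.uv l (EuclideanSpace.single i 1)
      rw [gg, ← this]
      simp [Pi.single_apply]
    have a2 : M * inner ℝ (u l) (θ (z i)) + inner ℝ (u l) w = s l * gg v y l := by
      have := hS.uv l y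
      rw [gg, ← this, h1, inner_add_right, inner_smul_right]
    rw [hx, inner_add_right] at a1
    have a3 : gg v (EuclideanSpace.single i 1) l = gg v y l / M + (- (inner ℝ (u l) w) / (s l * M))
        + inner ℝ (u l) (e i) / s l := by
      field_simp
      linear_combination M * (-a1) + a2
    have b1 : (- (inner ℝ (u l) w) / (s l * M)) ^ 2 ≤ (inner ℝ (u l) w) ^ 2 / (σ ^ 2 * M ^ 2) := by
      rw [div_pow, neg_sq, mul_pow]
      gcongr
    have b2 : (inner ℝ (u l) (e i) / s l) ^ 2 ≤ (inner ℝ (u l) (e i)) ^ 2 / σ ^ 2 := by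
      rw [div_pow]
      gcongr
    have b3 : (gg v y l / M) ^ 2 = (gg v y l) ^ 2 / M ^ 2 := div_pow _ _ _
    have c3 : ∀ A B D : ℝ, (A + B + D) ^ 2 ≤ 3 * (A ^ 2 + B ^ 2 + D ^ 2) := by
      intro A B D; nlinarith [sq_nonneg (A - B), sq_nonneg (A - D), sq_nonneg (B - D)]
    rw [a3]
    refine (c3 _ _ _).trans ?_
    rw [b3]; linarith
  calc _ ≤ ∑ l : Fin p, 3 * ((gg v y l) ^ 2 / M ^ 2 + (inner ℝ (u l) w) ^ 2 / (σ ^ 2 * M ^ 2) +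
        (if (l : ℕ) < κ then (inner ℝ (u l) (e i)) ^ 2 else 0) / σ ^ 2) := by
        refine Finset.sum_le_sum fun l _ => ?_
        split_ifs with hl
        · exact key l hl
        · positivity
    _ = 3 * ((∑ l : Fin p, (gg v y l) ^ 2) / M ^ 2 + ‖w‖ ^ 2 / (σ ^ 2 * M ^ 2) +
          ‖W u κ (e i)‖ ^ 2 / σ ^ 2) := by
        rw [norm_W_sq, parseval u w, ← Finset.mul_sum, Finset.sum_add_distrib,
          Finset.sum_add_distrib, Finset.sum_div, Finset.sum_div, Finset.sum_div]
    _ ≤ _ := by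
        have d1 : (∑ l : Fin p, (gg v y l) ^ 2) / M ^ 2 ≤ 1 / M := by
          have := sum_gg_le (p := p) v y
          rw [h5] at this
          rw [div_le_div_iff₀ (by positivity) hM0]
          nlinarith
        have d2 : ‖w‖ ^ 2 / (σ ^ 2 * M ^ 2) ≤ ε ^ 2 / (σ ^ 2 * M) := by
          rw [div_le_div_iff₀ (by positivity) (by positivity)]
          have : 0 < σ ^ 2 * M := by positivity
          nlinarith
        linarith

lemma loo_t {x : Fin (n + 1) → H p}
    {u : OrthonormalBasis (Fin p) ℝ (H p)} {v : OrthonormalBasis (Fin (n + 1)) ℝ (H (n + 1))}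
    {s : ℕ → ℝ} (hS : SV x u v s) (i : Fin (n + 1))
    {u' : OrthonormalBasis (Fin p) ℝ (H p)} {v' : OrthonormalBasis (Fin n) ℝ (H n)}
    {s' : ℕ → ℝ} (hS' : SV (fun j => x (i.succAbove j)) u' v' s')
    {κ : ℕ} {ε σ : ℝ} (hε : 0 < ε) (hs' : s' κ ≤ ε) (hσ : 2 * ε ≤ σ)
    (hs : ∀ l, l < κ → σ ≤ s l) (hxi : ‖x i - W u' κ (x i)‖ ≤ 3 * ε)
    (l : Fin p) (hl : (l : ℕ) < κ) :
    ‖u l - W u' κ (u l)‖ ≤ 6 * ε / σ * |gg v (EuclideanSpace.single i 1) l| := by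
  have hsl := hs l hl
  set t := u l - W u' κ (u l) with ht
  have ct : ∀ (a : H p) (b : Fin p), inner ℝ (u' b) (a - W u' κ a) =
      if (b : ℕ) < κ then 0 else inner ℝ (u' b) a := by
    intro a b
    rw [inner_sub_right, inner_W]; split_ifs <;> simp
  have nt : ‖t‖ ^ 2 = ∑ b : Fin p, if (b : ℕ) < κ then 0 else (inner ℝ (u' b) (u l)) ^ 2 := by
    rw [parseval u']
    refine Finset.sum_congr rfl fun b _ => ?_
    rw [ht, ct]; split_ifs <;> simp
  have a1 : inner ℝ (x i) (u l) = s l * gg v (EuclideanSpace.single i 1) l := by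
    have := hS.uv l (EuclideanSpace.single i 1)
    rw [gg, ← this]
    simp [Pi.single_apply, real_inner_comm]
  have e1 : inner ℝ (u l) t = ‖t‖ ^ 2 := by
    rw [nt, ← u'.sum_inner_mul_inner (u l) t]
    refine Finset.sum_congr rfl fun b _ => ?_
    rw [ht, ct, real_inner_comm]; split_ifs
    · simp
    · rw [real_inner_comm, sq]
  have e2 : inner ℝ (x i) t = inner ℝ (x i - W u' κ (x i)) t := by
    rw [← u'.sum_inner_mul_inner (x i) t, ← u'.sum_inner_mul_inner (x i - W u' κ (x i)) t]
    refine Finset.sum_congr rfl fun b _ => ?_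
    rw [ht, ct, real_inner_comm (u' b) (x i - W u' κ (x i)), ct, real_inner_comm]
    split_ifs <;> simp
  have e3 : ∑ j, inner ℝ (x j) t * inner ℝ (x j) (u l) = s l ^ 2 * ‖t‖ ^ 2 := by
    rw [hS.gram, Finset.sum_eq_single l]
    · rw [e1]; simp
    · intro b _ hb
      rw [u.inner_eq_zero hb]; simp
    · simp
  have e4 : ∑ j, inner ℝ (x (i.succAbove j)) t * inner ℝ (x (i.succAbove j)) (u l)
      ≤ ε ^ 2 * ‖t‖ ^ 2 := by
    rw [hS'.gram, nt, Finset.mul_sum]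
    refine Finset.sum_le_sum fun b _ => ?_
    rw [ht, ct]
    split_ifs with hb
    · simp
    · rw [← sq]
      exact mul_le_mul_of_nonneg_right (pow_le_pow_left₀ (hS'.nonneg _)
        ((hS'.anti _ _ (not_lt.1 hb)).trans hs') 2) (sq_nonneg _)
  rw [Fin.sum_univ_succAbove _ i, e2, a1] at e3
  set g := gg v (EuclideanSpace.single i 1) l with hg
  have e5 : inner ℝ (x i - W u' κ (x i)) t * (s l * g) ≤ 3 * ε * ‖t‖ * (s l * |g|) := by
    have hsl0 : 0 ≤ s l := hS.nonneg _
    calc _ ≤ |inner ℝ (x i - W u' κ (x i)) t * (s l * g)| := le_abs_self _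
      _ = |inner ℝ (x i - W u' κ (x i)) t| * (s l * |g|) := by
          rw [abs_mul, abs_mul, abs_of_nonneg hsl0]
      _ ≤ _ := by
          refine mul_le_mul_of_nonneg_right ?_ (by positivity)
          exact (abs_real_inner_le_norm _ _).trans
            (mul_le_mul_of_nonneg_right hxi (norm_nonneg _))
  have hσ0 : 0 < σ := by linarith
  have hs0 : 0 < s l := by linarith
  set T := ‖t‖ with hT
  have hT0 : 0 ≤ T := norm_nonneg _
  have hg0 := abs_nonneg g
  rcases hT0.eq_or_lt with h | h
  · rw [← h]; positivity
  have f1 : s l ^ 2 * T ^ 2 ≤ 3 * ε * T * (s l * |g|) + ε ^ 2 * T ^ 2 := by linarith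
  have f2 : ε ^ 2 ≤ s l ^ 2 / 2 := by nlinarith
  have f3 : s l ^ 2 / 2 * T ^ 2 ≤ 3 * ε * T * (s l * |g|) := by nlinarith [sq_nonneg T]
  have f4 : (s l * T) * (s l * T) ≤ (s l * T) * (6 * ε * |g|) := by nlinarith
  have f5 : s l * T ≤ 6 * ε * |g| := le_of_mul_le_mul_left f4 (by positivity)
  rw [div_mul_eq_mul_div, le_div_iff₀ hσ0]
  nlinarith

lemma loo_main {z : Fin (n + 1) → Fin k} {θ : Fin k → H p} {x e : Fin (n + 1) → H p} {ε : ℝ}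
    (hx : ∀ j, x j = θ (z j) + e j) (hε : 0 < ε)
    (hE : ∀ y : H (n + 1), ‖∑ i, y i • e i‖ ≤ ε * ‖y‖)
    {u : OrthonormalBasis (Fin p) ℝ (H p)} {v : OrthonormalBasis (Fin (n + 1)) ℝ (H (n + 1))}
    {s : ℕ → ℝ} (hS : SV x u v s) (i : Fin (n + 1))
    {u' : OrthonormalBasis (Fin p) ℝ (H p)} {v' : OrthonormalBasis (Fin n) ℝ (H n)}
    {s' : ℕ → ℝ} (hS' : SV (fun j => x (i.succAbove j)) u' v' s')
    {κ : ℕ} {σ : ℝ} (hs' : s' κ ≤ ε) (hσ : 2 * ε ≤ σ)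
    (hs : ∀ l, l < κ → σ ≤ s l) {m : ℝ} (hm : 1 < m) (hmz : ∀ a, m ≤ csz z a) :
    ‖W u κ (e i)‖ ≤ ‖W u' κ (e i)‖ +
      12 * ε ^ 2 / σ * (1 / Real.sqrt m + ‖W u κ (e i)‖ / σ) := by
  have hσ0 : 0 < σ := by linarith
  have hei : ‖e i‖ ≤ ε := noise_col hE i
  -- another member of the cluster
  obtain ⟨j, hj⟩ : ∃ j, z (i.succAbove j) = z i := by
    have h1 : 1 < (Finset.univ.filter fun j => z j = z i).card := by
      have := hm.trans_le (hmz (z i))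
      rw [csz] at this; exact_mod_cast this
    obtain ⟨b, hb, hbi⟩ := Finset.exists_mem_ne h1 i
    obtain ⟨j, hj⟩ := Fin.exists_succAbove_eq hbi
    exact ⟨j, by rw [hj]; simpa using hb⟩
  have hxi : ‖x i - W u' κ (x i)‖ ≤ 3 * ε := by
    have h1 := hS'.sub_le κ (EuclideanSpace.single j 1)
    have h2 : ∑ b, (EuclideanSpace.single j (1 : ℝ) : H n) b • x (i.succAbove b)
        = x (i.succAbove j) := by simp [Pi.single_apply]
    rw [h2] at h1
    have h3 : x i - W u' κ (x i) = (x (i.succAbove j) - W u' κ (x (i.succAbove j)))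
        - (e (i.succAbove j) - W u' κ (e (i.succAbove j))) + (e i - W u' κ (e i)) := by
      rw [hx i, hx (i.succAbove j), hj, map_add, map_add]; abel
    have h4 := (norm_subW_le u' κ (e (i.succAbove j))).trans (noise_col hE _)
    have h5 := (norm_subW_le u' κ (e i)).trans hei
    have h6 : ‖x (i.succAbove j) - W u' κ (x (i.succAbove j))‖ ≤ ε := by
      refine h1.trans ?_
      simpa using hs'
    rw [h3]
    refine (norm_add_le _ _).trans ?_
    have := norm_sub_le (x (i.succAbove j) - W u' κ (x (i.succAbove j)))
      (e (i.succAbove j) - W u' κ (e (i.succAbove j)))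
    linarith
  set N := ‖W u κ (e i)‖ with hN
  have hN0 : 0 ≤ N := norm_nonneg _
  have hm0 : 0 < m := by linarith
  set R := ∑ l : Fin p, (if (l : ℕ) < κ then (gg v (EuclideanSpace.single i 1) l) ^ 2 else 0)
    with hR
  have hR1 : R ≤ (2 * (1 / Real.sqrt m + N / σ)) ^ 2 := by
    have h1 := V_bound hx hE hS σ hσ0 hs i
    have hM := hmz (z i)
    set M := csz z (z i)
    have h2 : 1 / M ≤ 1 / m := one_div_le_one_div_of_le hm0 hM
    have h3 : ε ^ 2 / (σ ^ 2 * M) ≤ 1 / 4 * (1 / m) := by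
      have hM0 : 0 < M := hm0.trans_le hM
      rw [div_mul_div_comm, div_le_div_iff₀ (by positivity) (by positivity)]
      have : 4 * ε ^ 2 ≤ σ ^ 2 := by nlinarith
      have : (4 * ε ^ 2) * m ≤ σ ^ 2 * M := by gcongr
      linarith
    have h4 : (1 / Real.sqrt m) ^ 2 = 1 / m := by rw [div_pow, Real.sq_sqrt hm0.le]; simp
    have h5 : (N / σ) ^ 2 = N ^ 2 / σ ^ 2 := div_pow _ _ _
    have h6 : 0 ≤ 1 / Real.sqrt m := by positivity
    have h7 : 0 ≤ N / σ := by positivity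
    have h8 : 0 < 1 / m := by positivity
    refine h1.trans ?_
    rw [← h5]
    nlinarith [mul_nonneg h6 h7, sq_nonneg (N / σ)]
  have hsa : ∀ a b : H p, inner ℝ a (b - W u' κ b) = inner ℝ (a - W u' κ a) b := by
    intro a b
    rw [← u'.sum_inner_mul_inner a, ← u'.sum_inner_mul_inner (a - W u' κ a)]
    refine Finset.sum_congr rfl fun c _ => ?_
    rw [real_inner_comm (u' c) (a - W u' κ a), inner_sub_right, inner_W, inner_sub_right, inner_W,
      real_inner_comm a]
    split_ifs <;> simp
  have hQ : ‖W u κ (e i - W u' κ (e i))‖ ≤ 12 * ε ^ 2 / σ * (1 / Real.sqrt m + N / σ) := by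
    refine le_of_sq_le_sq ?_ (by positivity)
    rw [norm_W_sq]
    calc _ ≤ ∑ l : Fin p, (6 * ε ^ 2 / σ) ^ 2 *
          (if (l : ℕ) < κ then (gg v (EuclideanSpace.single i 1) l) ^ 2 else 0) := by
          refine Finset.sum_le_sum fun l _ => ?_
          split_ifs with hl
          · rw [hsa]
            have h1 := loo_t hS i hS' hε hs' hσ hs hxi l hl
            have h2 : |inner ℝ (u l - W u' κ (u l)) (e i)| ≤
                (6 * ε ^ 2 / σ) * |gg v (EuclideanSpace.single i 1) l| := by
              refine (abs_real_inner_le_norm _ _).trans ?_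
              calc _ ≤ (6 * ε / σ * |gg v (EuclideanSpace.single i 1) l|) * ε := by gcongr
                _ = _ := by ring
            have h3 := pow_le_pow_left₀ (abs_nonneg _) h2 2
            rwa [sq_abs, mul_pow, sq_abs] at h3
          · simp
      _ = (6 * ε ^ 2 / σ) ^ 2 * R := by rw [hR, Finset.mul_sum]
      _ ≤ (6 * ε ^ 2 / σ) ^ 2 * (2 * (1 / Real.sqrt m + N / σ)) ^ 2 := by gcongr
      _ = _ := by ring
  have h1 : W u κ (e i) = W u κ (W u' κ (e i)) + W u κ (e i - W u' κ (e i)) := by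
    rw [← map_add]; congr 1; abel
  calc N ≤ _ := by rw [hN, h1]; exact norm_add_le _ _
    _ ≤ _ := add_le_add (norm_W_le u κ _) hQ

end loo

section cluster
variable {p N k : ℕ}

lemma kmeans_label {X : Fin N → H p} {zh : Fin N → Fin k} {c : Fin k → H p}
    (hK : ∀ (z' : Fin N → Fin k) (c' : Fin k → H p),
      ∑ i, ‖X i - c (zh i)‖ ^ 2 ≤ ∑ i, ‖X i - c' (z' i)‖ ^ 2) (i : Fin N) (a : Fin k) :
    ‖X i - c (zh i)‖ ≤ ‖X i - c a‖ := by
  have h := hK (Function.update zh i a) c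
  rw [← Finset.add_sum_erase _ _ (Finset.mem_univ i),
    ← Finset.add_sum_erase _ (fun j => ‖X j - c (Function.update zh i a j)‖ ^ 2)
      (Finset.mem_univ i)] at h
  have h2 : ∑ j ∈ Finset.univ.erase i, ‖X j - c (Function.update zh i a j)‖ ^ 2 =
      ∑ j ∈ Finset.univ.erase i, ‖X j - c (zh j)‖ ^ 2 := by
    refine Finset.sum_congr rfl fun j hj => ?_
    rw [Function.update_of_ne (Finset.ne_of_mem_erase hj)]
  rw [h2] at h
  simp only [Function.update_self] at h
  exact le_of_sq_le_sq (by linarith) (norm_nonneg _)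

lemma kmeans_centers {X : Fin N → H p} {zh z : Fin N → Fin k} {c θ : Fin k → H p} {G Δ m : ℝ}
    (hK : ∀ (z' : Fin N → Fin k) (c' : Fin k → H p),
      ∑ i, ‖X i - c (zh i)‖ ^ 2 ≤ ∑ i, ‖X i - c' (z' i)‖ ^ 2)
    (hG : ∑ i, ‖X i - θ (z i)‖ ^ 2 ≤ G) (hΔ0 : 0 < Δ) (hΔ : ∀ a b, a ≠ b → Δ ≤ ‖θ a - θ b‖)
    (hm : ∀ a, m ≤ csz z a) (hGm : 32 * G < m * Δ ^ 2) {φ : Equiv.Perm (Fin k)}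
    (hφ : ∀ φ' : Equiv.Perm (Fin k), (Finset.univ.filter fun i => zh i ≠ φ (z i)).card ≤
      (Finset.univ.filter fun i => zh i ≠ φ' (z i)).card) (a : Fin k) :
    m / 2 * ‖c (φ a) - θ a‖ ^ 2 ≤ 4 * G := by
  have hG0 : 0 ≤ G := le_trans (Finset.sum_nonneg fun i _ => sq_nonneg _) hG
  have hm0 : 0 < m := by
    by_contra h
    push Not at h
    nlinarith [sq_nonneg Δ]
  have h4 : ∑ i, ‖c (zh i) - θ (z i)‖ ^ 2 ≤ 4 * G := by
    have h1 := (hK z θ).trans hG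
    calc _ ≤ ∑ i, (2 * ‖X i - c (zh i)‖ ^ 2 + 2 * ‖X i - θ (z i)‖ ^ 2) := by
          refine Finset.sum_le_sum fun i _ => ?_
          have : c (zh i) - θ (z i) = (X i - θ (z i)) - (X i - c (zh i)) := by abel
          have h3 : ‖c (zh i) - θ (z i)‖ ≤ ‖X i - θ (z i)‖ + ‖X i - c (zh i)‖ := by
            rw [this]; exact norm_sub_le _ _
          nlinarith [norm_nonneg (c (zh i) - θ (z i)),
            sq_nonneg (‖X i - θ (z i)‖ - ‖X i - c (zh i)‖)]
      _ ≤ _ := by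
          rw [Finset.sum_add_distrib, ← Finset.mul_sum, ← Finset.mul_sum]; linarith
  set S := Finset.univ.filter fun i => Δ / 2 ≤ ‖c (zh i) - θ (z i)‖ with hS
  have hSc : (S.card : ℝ) * (Δ / 2) ^ 2 ≤ 4 * G := by
    refine le_trans ?_ h4
    calc _ = ∑ i ∈ S, (Δ / 2) ^ 2 := by simp
      _ ≤ ∑ i ∈ S, ‖c (zh i) - θ (z i)‖ ^ 2 := by
          refine Finset.sum_le_sum fun i hi => ?_
          have : Δ / 2 ≤ ‖c (zh i) - θ (z i)‖ := by simpa [hS] using hi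
          gcongr
      _ ≤ _ := Finset.sum_le_sum_of_subset_of_nonneg (Finset.subset_univ _)
          fun i _ _ => sq_nonneg _
  have hS2 : (S.card : ℝ) < m / 2 := by
    by_contra h
    push Not at h
    nlinarith [mul_le_mul_of_nonneg_right h (sq_nonneg Δ)]
  -- representatives
  have hrep : ∀ b : Fin k, ∃ i, z i = b ∧ i ∉ S := by
    intro b
    by_contra h
    push Not at h
    have h1 : (Finset.univ.filter fun i => z i = b) ⊆ S := fun i hi => h i (by simpa using hi)
    have h2 : csz z b ≤ S.card := by unfold csz; exact_mod_cast Finset.card_le_card h1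
    linarith [hm b]
  have hsep : ∀ i j, i ∉ S → j ∉ S → zh i = zh j → z i = z j := by
    intro i j hi hj hij
    by_contra hne
    have h1 := hΔ _ _ hne
    have h2 : ‖c (zh i) - θ (z i)‖ < Δ / 2 := by simpa [hS] using hi
    have h3 : ‖c (zh j) - θ (z j)‖ < Δ / 2 := by simpa [hS] using hj
    have h5 : θ (z i) - θ (z j) = (c (zh j) - θ (z j)) - (c (zh i) - θ (z i)) := by
      rw [hij]; abel
    have h6 := norm_sub_le (c (zh j) - θ (z j)) (c (zh i) - θ (z i))
    rw [← h5] at h6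
    linarith
  choose r hr1 hr2 using hrep
  have hinj : Function.Injective fun b => zh (r b) := by
    intro b b' h
    have := hsep _ _ (hr2 b) (hr2 b') h
    rwa [hr1, hr1] at this
  let φ0 : Equiv.Perm (Fin k) := Equiv.ofBijective _ (Finite.injective_iff_bijective.1 hinj)
  have hφ0 : ∀ i, i ∉ S → zh i = φ0 (z i) := by
    intro i hi
    obtain ⟨b, hb⟩ := φ0.surjective (zh i)
    have hb' : zh (r b) = zh i := hb
    have := hsep _ _ (hr2 b) hi hb'
    rw [hr1] at this
    rw [← this, hb]
  have he0 : (Finset.univ.filter fun i => zh i ≠ φ0 (z i)) ⊆ S := by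
    intro i hi
    by_contra h
    simp only [Finset.mem_filter] at hi
    exact hi.2 (hφ0 i h)
  have hφφ : ∀ b, φ b = φ0 b := by
    intro b
    by_contra hne
    have h1 : (Finset.univ.filter fun i => z i = b) ⊆
        (Finset.univ.filter fun i => zh i ≠ φ (z i)) ∪ S := by
      intro i hi
      by_contra hh
      simp only [Finset.mem_union, Finset.mem_filter, Finset.mem_univ, true_and, not_or,
        not_not] at hh hi
      apply hne
      rw [← hi, ← hh.1, hφ0 i hh.2]
    have h2 := (Finset.card_le_card h1).trans (Finset.card_union_le _ _)
    have h3 := (hφ φ0).trans (Finset.card_le_card he0)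
    have h5 : csz z b ≤ S.card + S.card := by
      unfold csz; exact_mod_cast h2.trans (by omega)
    linarith [hm b]
  -- count
  have hcount : m / 2 ≤ (((Finset.univ.filter fun i => z i = a) \ S).card : ℝ) := by
    have h1 := Finset.le_card_sdiff S (Finset.univ.filter fun i => z i = a)
    have h2 : csz z a ≤ (((Finset.univ.filter fun i => z i = a) \ S).card : ℝ) + S.card := by
      unfold csz
      have := (Nat.sub_le_iff_le_add).1 h1
      exact_mod_cast this
    linarith [hm a]
  calc _ ≤ (((Finset.univ.filter fun i => z i = a) \ S).card : ℝ) * ‖c (φ a) - θ a‖ ^ 2 := by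
        gcongr
    _ = ∑ i ∈ (Finset.univ.filter fun i => z i = a) \ S, ‖c (φ a) - θ a‖ ^ 2 := by simp
    _ = ∑ i ∈ (Finset.univ.filter fun i => z i = a) \ S, ‖c (zh i) - θ (z i)‖ ^ 2 := by
        refine Finset.sum_congr rfl fun i hi => ?_
        simp only [Finset.mem_sdiff, Finset.mem_filter, Finset.mem_univ, true_and] at hi
        rw [hφ0 i hi.2, hi.1, hφφ]
    _ ≤ _ := (Finset.sum_le_sum_of_subset_of_nonneg (Finset.subset_univ _)
          fun i _ _ => sq_nonneg _).trans h4

end cluster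

section main
variable {p n k : ℕ}

/-- insert a zero at position i -/
def pad (i : Fin (n + 1)) : H n →ₗ[ℝ] H (n + 1) where
  toFun y := WithLp.toLp 2 (Fin.insertNth (α := fun _ => ℝ) i 0 (fun j => y j))
  map_add' a b := by
    ext j; refine Fin.succAboveCases i ?_ (fun j => ?_) j <;> simp
  map_smul' r b := by
    ext j; refine Fin.succAboveCases i ?_ (fun j => ?_) j <;> simp

@[simp] lemma pad_same (i : Fin (n + 1)) (y : H n) : pad i y i = 0 := by simp [pad]
@[simp] lemma pad_succ (i : Fin (n + 1)) (y : H n) (j : Fin n) :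
    pad i y (i.succAbove j) = y j := by simp [pad]

lemma pad_norm (i : Fin (n + 1)) (y : H n) : ‖pad i y‖ = ‖y‖ := by
  rw [EuclideanSpace.norm_eq, EuclideanSpace.norm_eq, Fin.sum_univ_succAbove _ i]
  simp

set_option maxHeartbeats 1000000 in
theorem core {z : Fin (n + 1) → Fin k} {θ : Fin k → H p} {x e : Fin (n + 1) → H p} {ε : ℝ}
    (hx : ∀ j, x j = θ (z j) + e j) (hε : 0 < ε)
    (hE : ∀ y : H (n + 1), ‖∑ i, y i • e i‖ ≤ ε * ‖y‖)
    {uP : OrthonormalBasis (Fin p) ℝ (H p)} {vP : OrthonormalBasis (Fin (n + 1)) ℝ (H (n + 1))}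
    {sP : ℕ → ℝ} (hP : SV (fun j => θ (z j)) uP vP sP)
    {u : OrthonormalBasis (Fin p) ℝ (H p)} {v : OrthonormalBasis (Fin (n + 1)) ℝ (H (n + 1))}
    {s : ℕ → ℝ} (hS : SV x u v s) (i : Fin (n + 1))
    {u' : OrthonormalBasis (Fin p) ℝ (H p)} {v' : OrthonormalBasis (Fin n) ℝ (H n)}
    {s' : ℕ → ℝ} (hS' : SV (fun j => x (i.succAbove j)) u' v' s')
    {κ : ℕ} (hκ0 : 0 < κ) (hκ : κ ≤ k) (hPκ : sP κ = 0) {ρ : ℝ} (hρ : sP (κ - 1) = ρ * ε)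
    (hρ16 : 16 < ρ)
    {m : ℝ} (hm : 1 < m) (hmz : ∀ a, m ≤ csz z a)
    {Δ τ ψ : ℝ} (hΔ : ∀ a b, a ≠ b → Δ ≤ ‖θ a - θ b‖) (hτ0 : 0 < τ) (hτ : m * τ ^ 2 = k * ε ^ 2)
    (hψ : Δ = ψ * τ) (hψ16 : 16 ≤ ψ)
    {zh : Fin (n + 1) → Fin k} {c : Fin k → H p}
    (hK : ∀ (z' : Fin (n + 1) → Fin k) (c' : Fin k → H p),
      ∑ i, ‖W u κ (x i) - c (zh i)‖ ^ 2 ≤ ∑ i, ‖W u κ (x i) - c' (z' i)‖ ^ 2)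
    {φ : Equiv.Perm (Fin k)}
    (hφ : ∀ φ' : Equiv.Perm (Fin k), (Finset.univ.filter fun i => zh i ≠ φ (z i)).card ≤
      (Finset.univ.filter fun i => zh i ≠ φ' (z i)).card)
    (herr : zh i ≠ φ (z i)) :
    (1 - 100 * (ψ⁻¹ + (ρ⁻¹) ^ 2)) * Δ ≤ 2 * ‖W u' κ (e i)‖ := by
  have hψ0 : 0 < ψ := by linarith
  have hρ0 : 0 < ρ := by linarith
  have hΔ0 : 0 < Δ := by rw [hψ]; positivity
  have hm0 : 0 < m := by linarith
  have hk1 : (1 : ℝ) ≤ k := by exact_mod_cast (by omega : 1 ≤ k)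
  by_cases hψ100 : ψ < 100
  · have h1 : 1 ≤ 100 * ψ⁻¹ := by
      rw [← div_eq_mul_inv, le_div_iff₀ hψ0]; linarith
    have h2 : 0 ≤ (ρ⁻¹) ^ 2 := by positivity
    have h3 : (1 - 100 * (ψ⁻¹ + (ρ⁻¹) ^ 2)) * Δ ≤ 0 :=
      mul_nonpos_of_nonpos_of_nonneg (by linarith) hΔ0.le
    linarith [norm_nonneg (W u' κ (e i))]
  push Not at hψ100
  have hdiff : ∀ y : H (n + 1), ‖∑ i, y i • (x i - θ (z i))‖ ≤ ε * ‖y‖ := by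
    intro y
    have : ∀ i, x i - θ (z i) = e i := fun i => by rw [hx]; abel
    simp only [this]; exact hE y
  have hdiff' : ∀ y : H (n + 1), ‖∑ i, y i • (θ (z i) - x i)‖ ≤ ε * ‖y‖ := by
    intro y
    have : ∀ i, θ (z i) - x i = - e i := fun i => by rw [hx]; abel
    simp only [this, smul_neg, Finset.sum_neg_distrib, norm_neg]; exact hE y
  have hsκ : s κ ≤ ε := by
    have := hS.weyl2 hP ε hε.le hdiff κ
    rwa [hPκ, zero_add] at this
  have hs1 : sP (κ - 1) ≤ s (κ - 1) + ε := hP.weyl2 hS ε hε.le hdiff' (κ - 1)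
  have hs' : s' κ ≤ ε := by
    refine hS'.weyl κ ε hε.le ((ff vP κ).comp (pad i)) fun y hy => ?_
    have h1 := hP.tail_le κ (pad i y) (ff_zero hy)
    rw [hPκ, zero_mul] at h1
    have h1' := norm_le_zero_iff.1 h1
    have h2 := hE (pad i y)
    rw [pad_norm] at h2
    have h3 : ∑ j, y j • x (i.succAbove j) = ∑ j, pad i y j • x j := by
      rw [Fin.sum_univ_succAbove _ i]; simp
    have h4 : ∑ j, pad i y j • x j = ∑ j, pad i y j • θ (z j) + ∑ j, pad i y j • e j := by
      rw [← Finset.sum_add_distrib]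
      refine Finset.sum_congr rfl fun j _ => ?_
      rw [hx, smul_add]
    rw [h3, h4, h1', zero_add]; exact h2
  set σ := s (κ - 1) with hσdef
  have hσ : 15 / 16 * (ρ * ε) ≤ σ := by
    rw [hρ] at hs1; nlinarith
  have hσ15 : 15 * ε ≤ σ := by nlinarith
  have hσ0 : 0 < σ := by linarith
  have hsl : ∀ l, l < κ → σ ≤ s l := fun l hl => hS.anti _ _ (by omega)
  -- projection of centers
  have hθ2 := theta_sub hx hε.le hE hS hsκ
  have hθ : ∀ a, ‖θ a - W u κ (θ a)‖ ≤ 2 * τ := by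
    intro a
    refine le_of_sq_le_sq ?_ (by positivity)
    have h1 := hθ2 a
    have h2 := mul_le_mul_of_nonneg_right (hmz a) (sq_nonneg ‖θ a - W u κ (θ a)‖)
    have h3 : ε ^ 2 ≤ k * ε ^ 2 := le_mul_of_one_le_left (sq_nonneg _) hk1
    have h4 : m * ‖θ a - W u κ (θ a)‖ ^ 2 ≤ m * (2 * τ) ^ 2 := by nlinarith
    exact le_of_mul_le_mul_left h4 hm0
  have hG : ∑ i, ‖W u κ (x i) - θ (z i)‖ ^ 2 ≤ 10 * (k * ε ^ 2) := by
    have h1 := noise_W hε.le hE u κ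
    have h2 : ∑ i, ‖θ (z i) - W u κ (θ (z i))‖ ^ 2 ≤ 4 * (k * ε ^ 2) := by
      calc _ = ∑ a, ∑ i with z i = a, ‖θ (z i) - W u κ (θ (z i))‖ ^ 2 := by
            rw [Finset.sum_fiberwise]
        _ = ∑ a, csz z a * ‖θ a - W u κ (θ a)‖ ^ 2 := by
            refine Finset.sum_congr rfl fun a _ => ?_
            rw [csz, ← nsmul_eq_mul, ← Finset.sum_const]
            refine Finset.sum_congr rfl fun i hi => ?_
            rw [(Finset.mem_filter.1 hi).2]
        _ ≤ ∑ a : Fin k, 4 * ε ^ 2 := Finset.sum_le_sum fun a _ => hθ2 a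
        _ = _ := by simp; ring
    have h3 : (κ : ℝ) * ε ^ 2 ≤ k * ε ^ 2 := by
      have : (κ : ℝ) ≤ k := by exact_mod_cast hκ
      gcongr
    calc _ ≤ ∑ i, (2 * ‖W u κ (e i)‖ ^ 2 + 2 * ‖θ (z i) - W u κ (θ (z i))‖ ^ 2) := by
          refine Finset.sum_le_sum fun i _ => ?_
          have h4 : W u κ (x i) - θ (z i) = W u κ (e i) - (θ (z i) - W u κ (θ (z i))) := by
            rw [hx, map_add]; abel
          have h5 := norm_sub_le (W u κ (e i)) (θ (z i) - W u κ (θ (z i)))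
          rw [← h4] at h5
          nlinarith [norm_nonneg (W u κ (x i) - θ (z i)),
            sq_nonneg (‖W u κ (e i)‖ - ‖θ (z i) - W u κ (θ (z i))‖)]
      _ ≤ _ := by
          rw [Finset.sum_add_distrib, ← Finset.mul_sum, ← Finset.mul_sum]
          linarith
  have hGm : 32 * (10 * (k * ε ^ 2)) < m * Δ ^ 2 := by
    rw [← hτ, hψ]
    have h1 : 0 < m * τ ^ 2 := by positivity
    have h2 : 320 < ψ ^ 2 := by nlinarith
    have h3 := mul_lt_mul_of_pos_left h2 h1
    have h4 : m * (ψ * τ) ^ 2 = m * τ ^ 2 * ψ ^ 2 := by ring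
    rw [h4]; linarith
  have hcent : ∀ a, ‖c (φ a) - θ a‖ ≤ 9 * τ := by
    intro a
    have h1 := kmeans_centers hK hG hΔ0 hΔ hmz hGm hφ a
    rw [← hτ] at h1
    refine le_of_sq_le_sq ?_ (by positivity)
    have h2 : m * ‖c (φ a) - θ a‖ ^ 2 ≤ m * (9 * τ) ^ 2 := by
      have : 0 < m * τ ^ 2 := by positivity
      nlinarith
    exact le_of_mul_le_mul_left h2 hm0
  -- the error event
  have hmain : Δ - 40 * τ ≤ 2 * ‖W u κ (e i)‖ := by
    obtain ⟨b, hb⟩ := φ.surjective (zh i)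
    have hba : b ≠ z i := fun h => herr (by rw [← hb, h])
    have h1 := kmeans_label hK i (φ (z i))
    rw [← hb] at h1
    have h2 := hΔ _ _ hba
    have e1 : θ b - θ (z i) = -(c (φ b) - θ b) - (W u κ (x i) - c (φ b))
        + (W u κ (x i) - c (φ (z i))) + (c (φ (z i)) - θ (z i)) := by abel
    have e2 : W u κ (x i) - c (φ (z i)) = W u κ (e i) - (θ (z i) - W u κ (θ (z i)))
        - (c (φ (z i)) - θ (z i)) := by rw [hx, map_add]; abel
    have n1 : ‖θ b - θ (z i)‖ ≤ ‖c (φ b) - θ b‖ + ‖W u κ (x i) - c (φ b)‖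
        + ‖W u κ (x i) - c (φ (z i))‖ + ‖c (φ (z i)) - θ (z i)‖ := by
      rw [e1]
      refine (norm_add_le _ _).trans ?_
      gcongr
      refine (norm_add_le _ _).trans ?_
      gcongr
      refine (norm_sub_le _ _).trans ?_
      rw [norm_neg]
    have n2 : ‖W u κ (x i) - c (φ (z i))‖ ≤ ‖W u κ (e i)‖ + ‖θ (z i) - W u κ (θ (z i))‖
        + ‖c (φ (z i)) - θ (z i)‖ := by
      rw [e2]
      refine (norm_sub_le _ _).trans ?_
      gcongr
      exact norm_sub_le _ _
    linarith [hcent b, hcent (z i), hθ (z i)]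
  have hloo := loo_main hx hε hE hS i hS' hs' (by linarith : 2 * ε ≤ σ) hsl hm hmz
  set N := ‖W u κ (e i)‖ with hN
  set N' := ‖W u' κ (e i)‖ with hN'
  have hN0 : 0 ≤ N := norm_nonneg _
  have hετ : ε * (1 / Real.sqrt m) ≤ τ := by
    refine le_of_sq_le_sq ?_ hτ0.le
    rw [mul_pow, div_pow, Real.sq_sqrt hm0.le, one_pow, mul_one_div, div_le_iff₀ hm0]
    have h3 : ε ^ 2 ≤ k * ε ^ 2 := le_mul_of_one_le_left (sq_nonneg _) hk1
    linarith
  have g1 : 12 * ε ^ 2 / σ * (1 / Real.sqrt m) ≤ τ := by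
    have h1 : 12 * ε / σ ≤ 1 := by rw [div_le_one hσ0]; linarith
    calc _ = (12 * ε / σ) * (ε * (1 / Real.sqrt m)) := by ring
      _ ≤ 1 * τ := mul_le_mul h1 hετ (by positivity) (by norm_num)
      _ = τ := one_mul _
  have g2 : 12 * ε ^ 2 / σ * (N / σ) ≤ 14 * (ρ⁻¹) ^ 2 * N := by
    have h1 : ε / σ ≤ 16 / 15 * ρ⁻¹ := by
      rw [← div_eq_mul_inv, div_le_div_iff₀ hσ0 hρ0]; linarith
    have h2 : (ε / σ) ^ 2 ≤ (16 / 15 * ρ⁻¹) ^ 2 := pow_le_pow_left₀ (by positivity) h1 2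
    have h3 : 12 * (ε / σ) ^ 2 ≤ 14 * (ρ⁻¹) ^ 2 := by nlinarith [sq_nonneg (ρ⁻¹)]
    calc _ = (12 * (ε / σ) ^ 2) * N := by ring
      _ ≤ _ := by gcongr
  set r := (ρ⁻¹) ^ 2 with hr
  have hr0 : 0 ≤ r := by positivity
  have hr1 : r ≤ 1 / 256 := by
    have : ρ⁻¹ ≤ 1 / 16 := by rw [inv_eq_one_div]; exact one_div_le_one_div_of_le (by norm_num) hρ16.le
    have h0 : 0 ≤ ρ⁻¹ := by positivity
    rw [hr]; nlinarith
  have g3 : (1 - 14 * r) * N ≤ N' + τ := by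
    rw [mul_add] at hloo; linarith
  have g4 : (1 - 14 * r) * (Δ - 40 * τ) ≤ (1 - 14 * r) * (2 * N) :=
    mul_le_mul_of_nonneg_left hmain (by linarith)
  have g5 : ψ⁻¹ * Δ = τ := by rw [hψ]; field_simp
  have g6 : (1 - 100 * (ψ⁻¹ + r)) * Δ = Δ - 100 * τ - 100 * (r * Δ) := by
    rw [← g5]; ring
  rw [g6]
  nlinarith [mul_nonneg hr0 hτ0.le, mul_nonneg hr0 hΔ0.le]

end main

end LOO

namespace LOO
section conv
variable {p q : ℕ}

/-- columns as Euclidean vectors -/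
def col (A : Matrix (Fin p) (Fin q) ℝ) (j : Fin q) : H p := WithLp.toLp 2 fun b => A b j

lemma col_on (U : Matrix (Fin p) (Fin p) ℝ) (h : Uᵀ * U = 1) : Orthonormal ℝ (col U) := by
  rw [orthonormal_iff_ite]
  intro i j
  have := congrFun (congrFun h i) j
  rw [Matrix.mul_apply, Matrix.one_apply] at this
  rw [← this]
  simp [col, PiLp.inner_apply, mul_comm]

/-- the orthonormal basis of columns -/
def obasis (U : Matrix (Fin p) (Fin p) ℝ) (h : Uᵀ * U = 1) : OrthonormalBasis (Fin p) ℝ (H p) :=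
  OrthonormalBasis.mk (col_on U h) (by
    rw [(col_on U h).linearIndependent.span_eq_top_of_card_eq_finrank' (by simp)])

@[simp] lemma obasis_apply (U : Matrix (Fin p) (Fin p) ℝ) (h : Uᵀ * U = 1) (l : Fin p) :
    obasis U h l = col U l := by simp [obasis]

lemma sum_col (A : Matrix (Fin p) (Fin q) ℝ) (y : H q) :
    ∑ j, y j • col A j = WithLp.toLp 2 (A *ᵥ y.ofLp) := by
  ext b
  simp [col, Matrix.mulVec, dotProduct, mul_comm]

lemma inner_col (A : Matrix (Fin p) (Fin q) ℝ) (j : Fin q) (w : H p) :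
    inner ℝ (col A j) w = (Aᵀ *ᵥ w.ofLp) j := by
  simp [col, PiLp.inner_apply, Matrix.mulVec, dotProduct, mul_comm]

lemma vnorm_eq (x : Fin p → ℝ) : vnorm x = ‖(WithLp.toLp 2 x : H p)‖ := by
  rw [vnorm, EuclideanSpace.norm_eq]; simp

lemma sumsq_eq (x : Fin p → ℝ) : ∑ a, (x a) ^ 2 = ‖(WithLp.toLp 2 x : H p)‖ ^ 2 := by
  rw [EuclideanSpace.norm_sq_eq]; simp

lemma opnorm_le (A : Matrix (Fin p) (Fin q) ℝ) (y : H q) :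
    ‖∑ j, y j • col A j‖ ≤ opnorm A * ‖y‖ := by
  rw [sum_col]
  exact ContinuousLinearMap.le_opNorm
    (LinearMap.toContinuousLinearMap (Matrix.toEuclideanLin A)) y

lemma projr_eq (U : Matrix (Fin p) (Fin p) ℝ) (h : Uᵀ * U = 1) (κ : ℕ) (w : Fin p → ℝ) :
    (WithLp.toLp 2 ((projr U κ) *ᵥ w) : H p) = W (obasis U h) κ (WithLp.toLp 2 w) := by
  rw [W_apply]
  ext b
  simp only [projr, Matrix.mulVec, dotProduct, Matrix.of_apply, Finset.sum_mul, WithLp.ofLp_sum,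
    Finset.sum_apply]
  rw [Finset.sum_comm]
  refine Finset.sum_congr rfl fun l _ => ?_
  split_ifs with hl
  · rw [obasis_apply, inner_col]
    simp only [Matrix.mulVec, dotProduct, Matrix.transpose_apply,
      PiLp.smul_apply, smul_eq_mul, Finset.sum_mul, col]
    refine Finset.sum_congr rfl fun a _ => ?_
    ring
  · simp

lemma SVD_SV {A : Matrix (Fin p) (Fin q) ℝ} (D : SVDData p q A) :
    SV (col A) (obasis D.U D.hU) (obasis D.V D.hV) D.sv := by
  obtain ⟨U, V, sv, hU, hV, sv_anti, sv_nonneg, sv_zero, decomp⟩ := D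
  dsimp only
  set S : Matrix (Fin p) (Fin q) ℝ := Matrix.of fun (i : Fin p) (j : Fin q) =>
    if (i : ℕ) = (j : ℕ) then sv (i : ℕ) else 0 with hS
  have hA : A = U * S * Vᵀ := decomp
  have hUA : Uᵀ * A = S * Vᵀ := by
    rw [hA, Matrix.mul_assoc U, ← Matrix.mul_assoc, hU, Matrix.one_mul]
  have hSS : S * Sᵀ = Matrix.diagonal fun l : Fin p => sv l ^ 2 := by
    ext a b
    rw [Matrix.mul_apply, Matrix.diagonal_apply]
    simp only [hS, Matrix.of_apply, Matrix.transpose_apply]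
    by_cases ha : (a : ℕ) < q
    · rw [Finset.sum_eq_single ⟨a, ha⟩]
      · by_cases hab : a = b
        · simp [hab, sq]
        · have : ¬ ((b : ℕ) = a) := fun h => hab (Fin.ext h.symm)
          simp [hab, this]
      · intro c _ hc
        have : ¬ ((a : ℕ) = c) := fun h => hc (Fin.ext h.symm)
        simp [this]
      · simp
    · have h0 : sv a = 0 := sv_zero _ (by omega)
      simp [h0]
  refine ⟨sv_anti, sv_nonneg, sv_zero, ?_, ?_⟩
  · intro l y
    rw [sum_col, obasis_apply, inner_col, Matrix.mulVec_mulVec, hUA, ← Matrix.mulVec_mulVec]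
    rw [Matrix.mulVec, dotProduct]
    split_ifs with hl
    · rw [Finset.sum_eq_single ⟨l, hl⟩]
      · simp only [hS, Matrix.of_apply, if_true, obasis_apply, inner_col]
      · intro c _ hc
        have : ¬ ((l : ℕ) = c) := fun h => hc (Fin.ext h.symm)
        simp [hS, this]
      · simp
    · rw [mul_zero]
      refine Finset.sum_eq_zero fun c _ => ?_
      have : ¬ ((l : ℕ) = c) := by omega
      simp [hS, this]
  · intro a b
    have hAA : A * Aᵀ = U * (Matrix.diagonal fun l : Fin p => sv l ^ 2) * Uᵀ := by
      rw [← hSS]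
      conv_lhs => rw [hA]
      simp only [Matrix.transpose_mul, Matrix.transpose_transpose, Matrix.mul_assoc]
      rw [← Matrix.mul_assoc Vᵀ V, hV, Matrix.one_mul]
    have h1 : ∑ j, inner ℝ (col A j) a * inner ℝ (col A j) b =
        a.ofLp ⬝ᵥ ((A * Aᵀ) *ᵥ b.ofLp) := by
      rw [← Matrix.mulVec_mulVec, Matrix.dotProduct_mulVec, ← Matrix.mulVec_transpose]
      simp only [inner_col, dotProduct]
    rw [h1, hAA, ← Matrix.mulVec_mulVec, ← Matrix.mulVec_mulVec, Matrix.dotProduct_mulVec,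
      ← Matrix.mulVec_transpose]
    simp only [obasis_apply, inner_col, dotProduct, Matrix.mulVec_diagonal]
    refine Finset.sum_congr rfl fun l _ => ?_
    ring

end conv
end LOO

namespace LOO

lemma main_det {p n k : ℕ} {z : Fin (n + 1) → Fin k} {θ : Fin k → Fin p → ℝ}
    {Pm : Matrix (Fin p) (Fin (n + 1)) ℝ} (hPm : ∀ a j, Pm a j = θ (z j) a)
    {κ : ℕ} (hκ0 : 0 < κ) (hκ : κ ≤ k) (DP : SVDData p (n + 1) Pm) (hκz : DP.sv κ = 0)
    (hβ : 10 ≤ betaMin (n + 1) k z * ((n : ℝ) + 1) / (k : ℝ) ^ 2)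
    {X : Matrix (Fin p) (Fin (n + 1)) ℝ} (DX : SVDData p (n + 1) X) (i : Fin (n + 1))
    (DXi : SVDData p n (X.submatrix id i.succAbove))
    {zh : Fin (n + 1) → Fin k} {c : Fin k → Fin p → ℝ}
    (hK : IsKMeans (projr DX.U κ) X zh c) {φ : Equiv.Perm (Fin k)}
    (hφ : miscl zh z =
          ((Finset.univ.filter fun i => zh i ≠ φ (z i)).card : ℝ) / ((n : ℝ) + 1))
    {ρ ψ : ℝ} (hρ : ρ = DP.sv (κ - 1) / opnorm (X - Pm))
    (hψ : ψ = Delta θ / ((Real.sqrt (betaMin (n + 1) k z))⁻¹ * (k : ℝ) *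
            (Real.sqrt ((n : ℝ) + 1))⁻¹ * opnorm (X - Pm)))
    (hρ16 : 16 < ρ) (hψ16 : 16 ≤ ψ) (herr : zh i ≠ φ (z i)) :
    (1 - 100 * (ψ⁻¹ + (ρ⁻¹) ^ 2)) * Delta θ ≤
      2 * vnorm ((projr DXi.U κ).mulVec fun a => (X - Pm) a i) := by
  set ε := opnorm (X - Pm) with hεdef
  have hε0 : 0 ≤ ε := norm_nonneg _
  have hε : 0 < ε := by
    rcases hε0.eq_or_lt with h | h
    · rw [← h] at hρ; simp at hρ; linarith
    · exact h
  have hk : 0 < k := by omega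
  have hkR : (0 : ℝ) < k := by exact_mod_cast hk
  have : Nonempty (Fin k) := ⟨⟨0, hk⟩⟩
  have hn0 : (0 : ℝ) < (n : ℝ) + 1 := by positivity
  set m : ℝ := ⨅ a : Fin k, ((Finset.univ.filter fun i => z i = a).card : ℝ) with hm
  have hβm : betaMin (n + 1) k z * ((n : ℝ) + 1) = k * m := by
    unfold betaMin; rw [← hm]; push_cast; field_simp
  have hmz : ∀ a, m ≤ csz z a := fun a => ciInf_le (Set.finite_range _).bddBelow a
  have hm10 : 10 * (k : ℝ) ≤ m := by
    rw [hβm, le_div_iff₀ (by positivity)] at hβ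
    nlinarith
  have hk1 : (1 : ℝ) ≤ k := by exact_mod_cast hk
  have hm1 : 1 < m := by linarith
  have hβ0 : 0 < betaMin (n + 1) k z := by
    have : 0 < betaMin (n + 1) k z * ((n : ℝ) + 1) := by rw [hβm]; positivity
    exact (pos_iff_pos_of_mul_pos this).2 hn0
  set τ := (Real.sqrt (betaMin (n + 1) k z))⁻¹ * (k : ℝ) *
            (Real.sqrt ((n : ℝ) + 1))⁻¹ * ε with hτ
  have hτ0 : 0 < τ := by
    have := Real.sqrt_pos.2 hβ0
    have := Real.sqrt_pos.2 hn0
    positivity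
  have hτ2 : m * τ ^ 2 = k * ε ^ 2 := by
    rw [hτ, mul_pow, mul_pow, mul_pow, inv_pow, inv_pow, Real.sq_sqrt hβ0.le,
      Real.sq_sqrt hn0.le]
    have h1 : (betaMin (n + 1) k z)⁻¹ * (k : ℝ) ^ 2 * ((n : ℝ) + 1)⁻¹ = k / m := by
      have : (betaMin (n + 1) k z)⁻¹ * (k : ℝ) ^ 2 * ((n : ℝ) + 1)⁻¹ =
        k ^ 2 * (betaMin (n + 1) k z * ((n : ℝ) + 1))⁻¹ := by rw [mul_inv]; ring
      rw [this, hβm]; field_simp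
    rw [h1]; field_simp
  have hψτ : Delta θ = ψ * τ := by rw [hψ]; field_simp
  let θ' : Fin k → H p := fun a => WithLp.toLp 2 (θ a)
  have hcolP : col Pm = fun j => θ' (z j) := by
    funext j; ext b; simp [col, θ', hPm]
  have hx : ∀ j, col X j = θ' (z j) + col (X - Pm) j := by
    intro j; ext b; simp [col, θ', hPm]
  have hSP := SVD_SV DP
  rw [hcolP] at hSP
  have hSi := SVD_SV DXi
  have hcoli : col (X.submatrix id i.succAbove) = fun j => col X (i.succAbove j) := by
    funext j; ext b; simp [col]
  rw [hcoli] at hSi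
  have hΔ : ∀ a b, a ≠ b → Delta θ ≤ ‖θ' a - θ' b‖ := by
    intro a b hab
    have : Delta θ ≤ vnorm (fun i => θ a i - θ b i) :=
      ciInf_le (f := fun q : {q : Fin k × Fin k // q.1 ≠ q.2} =>
        vnorm (fun i => θ q.1.1 i - θ q.1.2 i)) (Set.finite_range _).bddBelow ⟨(a, b), hab⟩
    rwa [vnorm_eq] at this
  have hWx : ∀ j (w : Fin p → ℝ), ∑ a, ((projr DX.U κ).mulVec (fun b => X b j) a - w a) ^ 2 =
      ‖W (obasis DX.U DX.hU) κ (col X j) - WithLp.toLp 2 w‖ ^ 2 := by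
    intro j w
    rw [sumsq_eq (fun a => (projr DX.U κ).mulVec (fun b => X b j) a - w a), col, ← projr_eq]
    rfl
  have hK' : ∀ (z' : Fin (n + 1) → Fin k) (c' : Fin k → H p),
      ∑ i, ‖W (obasis DX.U DX.hU) κ (col X i) - (fun a => (WithLp.toLp 2 (c a) : H p)) (zh i)‖ ^ 2
        ≤ ∑ i, ‖W (obasis DX.U DX.hU) κ (col X i) - c' (z' i)‖ ^ 2 := by
    intro z' c'
    have := hK z' (fun a => (c' a).ofLp)
    simp only [hWx] at this
    exact this
  have hφ' : ∀ φ' : Equiv.Perm (Fin k), (Finset.univ.filter fun i => zh i ≠ φ (z i)).card ≤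
      (Finset.univ.filter fun i => zh i ≠ φ' (z i)).card := by
    intro φ'
    unfold miscl at hφ
    push_cast at hφ
    rw [div_left_inj' hn0.ne'] at hφ
    have h1 : (⨅ φ : Equiv.Perm (Fin k), ((Finset.univ.filter fun i => zh i ≠ φ (z i)).card : ℝ))
      ≤ ((Finset.univ.filter fun i => zh i ≠ φ' (z i)).card : ℝ) :=
      ciInf_le (f := fun φ : Equiv.Perm (Fin k) =>
        ((Finset.univ.filter fun i => zh i ≠ φ (z i)).card : ℝ)) (Set.finite_range _).bddBelow φ'
    rw [hφ] at h1
    exact_mod_cast h1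
  have hρ' : DP.sv (κ - 1) = ρ * ε := by rw [hρ]; field_simp
  have := core (z := z) (θ := θ') (x := col X) (e := col (X - Pm)) (ε := ε)
    hx hε (opnorm_le (X - Pm)) hSP (SVD_SV DX) i hSi hκ0 hκ hκz
    (ρ := ρ) hρ' hρ16 (m := m) hm1 hmz (Δ := Delta θ) (τ := τ) (ψ := ψ) hΔ hτ0 hτ2 hψτ hψ16
    (zh := zh) (c := fun a => (WithLp.toLp 2 (c a) : H p)) hK' (φ := φ) hφ' herr
  rw [vnorm_eq, projr_eq _ DXi.hU]
  exact this

end LOO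

/-- **Lemma 2 (leave-one-out entrywise error decomposition).**
There is a universal constant `C > 0` such that for the spectral clustering with `r = κ`
components under `βn/k² ≥ 10`, `ρ₀ := λ_κ/‖E‖ > 16` and `ψ₀ ≥ 16` (for every realization),
one has for every `ω` and every `i`,
`𝟙{ẑ_i ≠ φ(z*_i)} ≤ 𝟙{(1 − C(ψ₀⁻¹ + ρ₀⁻²))Δ ≤ 2‖Û_{−i,1:κ}Û_{−i,1:κ}ᵀ ε_i‖}`;
consequently `E ℓ(ẑ,z*) ≤ n⁻¹ Σ_i P((1 − C(ψ₀⁻¹ + ρ₀⁻²))Δ ≤ 2‖Û_{−i,1:κ}Û_{−i,1:κ}ᵀ ε_i‖)`. -/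
theorem entrywise_decomposition_loo :
    ∃ C : ℝ, 0 < C ∧
      ∀ (Ω : Type) (mΩ : MeasurableSpace Ω) (μ : Measure Ω), IsProbabilityMeasure μ →
      ∀ (p n k : ℕ) (z : Fin (n + 1) → Fin k) (θ : Fin k → Fin p → ℝ)
        (Pm : Matrix (Fin p) (Fin (n + 1)) ℝ), (∀ a j, Pm a j = θ (z j) a) →
      ∀ κ : ℕ, 0 < κ → κ ≤ k →
      ∀ DP : SVDData p (n + 1) Pm, 0 < DP.sv (κ - 1) → DP.sv κ = 0 →
      10 ≤ betaMin (n + 1) k z * ((n : ℝ) + 1) / (k : ℝ) ^ 2 →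
      ∀ (X : Ω → Matrix (Fin p) (Fin (n + 1)) ℝ)
        (DX : ∀ ω, SVDData p (n + 1) (X ω))
        (DXi : ∀ ω (i : Fin (n + 1)), SVDData p n ((X ω).submatrix id i.succAbove))
        (zh : Ω → Fin (n + 1) → Fin k) (c : Ω → Fin k → Fin p → ℝ),
        (∀ ω, IsKMeans (projr (DX ω).U κ) (X ω) (zh ω) (c ω)) →
      ∀ φ : Ω → Equiv.Perm (Fin k),
        (∀ ω, miscl (zh ω) z =
          ((Finset.univ.filter fun i => zh ω i ≠ (φ ω) (z i)).card : ℝ) / ((n : ℝ) + 1)) →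
      ∀ ρ0 ψ0 : Ω → ℝ,
        (∀ ω, ρ0 ω = DP.sv (κ - 1) / opnorm (X ω - Pm)) →
        (∀ ω, ψ0 ω = Delta θ / ((Real.sqrt (betaMin (n + 1) k z))⁻¹ * (k : ℝ) *
            (Real.sqrt ((n : ℝ) + 1))⁻¹ * opnorm (X ω - Pm))) →
        (∀ ω, 16 < ρ0 ω) → (∀ ω, 16 ≤ ψ0 ω) →
        (∀ ω i, zh ω i ≠ (φ ω) (z i) →
          (1 - C * ((ψ0 ω)⁻¹ + ((ρ0 ω)⁻¹) ^ 2)) * Delta θ ≤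
            2 * vnorm ((projr (DXi ω i).U κ).mulVec fun a => (X ω - Pm) a i)) ∧
        ∫⁻ ω, ENNReal.ofReal (miscl (zh ω) z) ∂μ ≤
          ((n : ℝ≥0∞) + 1)⁻¹ * ∑ i : Fin (n + 1),
            μ {ω | (1 - C * ((ψ0 ω)⁻¹ + ((ρ0 ω)⁻¹) ^ 2)) * Delta θ ≤
              2 * vnorm ((projr (DXi ω i).U κ).mulVec fun a => (X ω - Pm) a i)} := by
  refine ⟨100, by norm_num, ?_⟩
  intro Ω mΩ μ hμ p n k z θ Pm hPm κ hκ0 hκ DP _ hκz hβ X DX DXi zh c hK φ hφ ρ0 ψ0 hρ hψ hρ16 hψ16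
  have main : ∀ ω i, zh ω i ≠ (φ ω) (z i) →
          (1 - 100 * ((ψ0 ω)⁻¹ + ((ρ0 ω)⁻¹) ^ 2)) * Delta θ ≤
            2 * vnorm ((projr (DXi ω i).U κ).mulVec fun a => (X ω - Pm) a i) :=
    fun ω i h => LOO.main_det hPm hκ0 hκ DP hκz hβ (DX ω) i (DXi ω i) (hK ω) (hφ ω) (hρ ω) (hψ ω)
      (hρ16 ω) (hψ16 ω) h
  refine ⟨main, ?_⟩
  set A : Fin (n + 1) → Set Ω := fun i =>
    {ω | (1 - 100 * ((ψ0 ω)⁻¹ + ((ρ0 ω)⁻¹) ^ 2)) * Delta θ ≤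
              2 * vnorm ((projr (DXi ω i).U κ).mulVec fun a => (X ω - Pm) a i)} with hA
  have hB : ∀ i, MeasurableSet (toMeasurable μ (A i)) := fun i => measurableSet_toMeasurable _ _
  calc ∫⁻ ω, ENNReal.ofReal (miscl (zh ω) z) ∂μ
      ≤ ∫⁻ ω, ((n : ℝ≥0∞) + 1)⁻¹ *
          ∑ i, (toMeasurable μ (A i)).indicator (fun _ => (1 : ℝ≥0∞)) ω ∂μ := by
        refine lintegral_mono fun ω => ?_
        have hn : (0 : ℝ) < (n : ℝ) + 1 := by positivity
        have e1 : ENNReal.ofReal ((n : ℝ) + 1) = (n : ℝ≥0∞) + 1 := by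
          rw [ENNReal.ofReal_add (by positivity) (by norm_num)]; simp
        rw [hφ ω, ENNReal.ofReal_div_of_pos hn, e1, ENNReal.div_eq_inv_mul]
        refine mul_le_mul_right ?_ _
        rw [ENNReal.ofReal_natCast, Finset.card_filter, Nat.cast_sum]
        refine Finset.sum_le_sum fun i _ => ?_
        by_cases h : zh ω i ≠ (φ ω) (z i)
        · have : ω ∈ toMeasurable μ (A i) := subset_toMeasurable μ _ (main ω i h)
          rw [Set.indicator_of_mem this]; simp [h]
        · simp [h]
    _ = ((n : ℝ≥0∞) + 1)⁻¹ * ∑ i, μ (toMeasurable μ (A i)) := by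
        rw [lintegral_const_mul, lintegral_finsetSum]
        · congr 1
          refine Finset.sum_congr rfl fun i _ => ?_
          rw [lintegral_indicator_const (hB i), one_mul]
        · intro i _; exact measurable_const.indicator (hB i)
        · exact Finset.measurable_sum _ fun i _ => measurable_const.indicator (hB i)
    _ = _ := by simp only [measure_toMeasurable, hA]
end
end

section
/- Let z̃ be the adaptive spectral clustering with threshold T. Assume βn/k⁴ ≥ 400, let ψ̃₀ := Δ/(β^{−1/2} k² n^{−1/2} ‖E‖) and ρ̃ := T/‖E‖, and assume 256 < ρ̃ < ψ̃₀/64 (which ensures r̂ is well defined). Let φ be the bijection of [k] with ℓ(z̃,z*) = (1/n)|{i : z̃_i ≠ φ(z*_i)}|. There exist universal constants C, C' > 0 such that if ψ̃₀ > C, then for every i ∈ [n]: 𝟙{z̃_i ≠ φ(z*_i)} ≤ 𝟙{ (1 − C'(ρ̃ ψ̃₀^{−1} + ρ̃^{−1})) Δ ≤ 2‖Û_{−i,1:r̂} Û_{−i,1:r̂}ᵀ ε_i‖ }. Consequently E ℓ(z̃,z*) ≤ n^{−1} Σ_{i∈[n]} E 𝟙{ (1 − C'(ρ̃ ψ̃₀^{−1}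 + ρ̃^{−1})) Δ ≤ 2‖Û_{−i,1:r̂} Û_{−i,1:r̂}ᵀ ε_i‖ }. -/
open Matrix MeasureTheory ProbabilityTheory
open scoped BigOperators ENNReal NNReal

noncomputable section

theorem vn_eq {p : ℕ} (x : Fin p → ℝ) : vnorm x = ‖WithLp.toLp 2 x‖ := by
  simp [vnorm, EuclideanSpace.norm_eq]

theorem vn_nonneg {p : ℕ} (x : Fin p → ℝ) : 0 ≤ vnorm x := Real.sqrt_nonneg _

theorem vn_sq {p : ℕ} (x : Fin p → ℝ) : vnorm x ^ 2 = x ⬝ᵥ x := by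
  rw [vnorm, Real.sq_sqrt (Finset.sum_nonneg fun i _ => sq_nonneg _)]
  simp [dotProduct, sq]

theorem vn_add {p : ℕ} (x y : Fin p → ℝ) : vnorm (x + y) ≤ vnorm x + vnorm y := by
  simp only [vn_eq, WithLp.toLp_add]; exact norm_add_le _ _

theorem vn_neg {p : ℕ} (x : Fin p → ℝ) : vnorm (-x) = vnorm x := by
  simp [vnorm]

theorem vn_sub_comm {p : ℕ} (x y : Fin p → ℝ) : vnorm (x - y) = vnorm (y - x) := by
  rw [← vn_neg, neg_sub]

theorem vn_tri {p : ℕ} (x y z : Fin p → ℝ) : vnorm (x - z) ≤ vnorm (x - y) + vnorm (y - z) := by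
  have := vn_add (x - y) (y - z)
  simpa using this

theorem vn_smul {p : ℕ} (c : ℝ) (x : Fin p → ℝ) : vnorm (c • x) = |c| * vnorm x := by
  simp only [vn_eq, WithLp.toLp_smul, norm_smul, Real.norm_eq_abs]

theorem vn_cs {p : ℕ} (x y : Fin p → ℝ) : x ⬝ᵥ y ≤ vnorm x * vnorm y := by
  simp only [vnorm]
  exact Real.sum_mul_le_sqrt_mul_sqrt _ _ _

theorem vn_cs_abs {p : ℕ} (x y : Fin p → ℝ) : |x ⬝ᵥ y| ≤ vnorm x * vnorm y := by
  rw [abs_le]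
  refine ⟨?_, vn_cs x y⟩
  have := vn_cs (-x) y
  rw [vn_neg, neg_dotProduct] at this
  linarith

theorem opn_le {m n : ℕ} (A : Matrix (Fin m) (Fin n) ℝ) (x : Fin n → ℝ) :
    vnorm (A *ᵥ x) ≤ opnorm A * vnorm x := by
  rw [vn_eq, vn_eq, opnorm]
  exact (LinearMap.toContinuousLinearMap (Matrix.toEuclideanLin A)).le_opNorm (WithLp.toLp 2 x)

theorem opn_nonneg {m n : ℕ} (A : Matrix (Fin m) (Fin n) ℝ) : 0 ≤ opnorm A := norm_nonneg _

theorem dot_tr {m n : ℕ} (A : Matrix (Fin m) (Fin n) ℝ) (x : Fin m → ℝ) (y : Fin n → ℝ) :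
    (Aᵀ *ᵥ x) ⬝ᵥ y = x ⬝ᵥ (A *ᵥ y) := by
  rw [mulVec_transpose, ← dotProduct_mulVec]

theorem opn_tr {m n : ℕ} (A : Matrix (Fin m) (Fin n) ℝ) (x : Fin m → ℝ) :
    vnorm (Aᵀ *ᵥ x) ≤ opnorm A * vnorm x := by
  have h1 : vnorm (Aᵀ *ᵥ x) ^ 2 ≤ vnorm x * (opnorm A * vnorm (Aᵀ *ᵥ x)) := by
    rw [vn_sq, dot_tr]
    exact (vn_cs _ _).trans (mul_le_mul_of_nonneg_left (opn_le _ _) (vn_nonneg _))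
  rcases (vn_nonneg (Aᵀ *ᵥ x)).eq_or_lt with h | h
  · rw [← h]; exact mul_nonneg (opn_nonneg _) (vn_nonneg _)
  · nlinarith

namespace SVDData
variable {p n : ℕ} {A : Matrix (Fin p) (Fin n) ℝ} (D : SVDData p n A)

theorem hU' : D.U * D.Uᵀ = 1 := mul_eq_one_comm.mp D.hU

theorem gram : A * Aᵀ = D.U * diagonal (fun l : Fin p => D.sv l ^ 2) * D.Uᵀ := by
  have h := D.decomp
  set S : Matrix (Fin p) (Fin n) ℝ := Matrix.of fun (i : Fin p) (j : Fin n) =>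
    if (i : ℕ) = (j : ℕ) then D.sv (i : ℕ) else 0 with hS
  have hSS : S * Sᵀ = diagonal (fun l : Fin p => D.sv l ^ 2) := by
    ext i l
    rw [mul_apply, diagonal_apply]
    simp only [hS, transpose_apply, of_apply]
    by_cases hi : (i : ℕ) < n
    · rw [Finset.sum_eq_single (⟨i, hi⟩ : Fin n)]
      · by_cases hil : i = l
        · subst hil; simp [sq]
        · have : (l : ℕ) ≠ i := fun h => hil (Fin.ext h.symm)
          simp [hil, this]
      · intro b _ hb
        have : (i : ℕ) ≠ b := fun h => hb (Fin.ext h.symm)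
        simp [this]
      · simp
    · have h0 : D.sv i = 0 := D.sv_zero _ (by omega)
      simp [h0]
  calc A * Aᵀ = (D.U * S * D.Vᵀ) * (D.U * S * D.Vᵀ)ᵀ := by rw [← h]
    _ = D.U * S * (D.Vᵀ * D.V) * Sᵀ * D.Uᵀ := by
      simp only [transpose_mul, transpose_transpose, Matrix.mul_assoc]
    _ = D.U * (S * Sᵀ) * D.Uᵀ := by
      rw [D.hV, Matrix.mul_one]; simp only [Matrix.mul_assoc]
    _ = _ := by rw [hSS]

/-- coordinates -/
def co (w : Fin p → ℝ) : Fin p → ℝ := D.Uᵀ *ᵥ w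

theorem co_add (v w : Fin p → ℝ) : D.co (v + w) = D.co v + D.co w := mulVec_add _ _ _
theorem co_sub (v w : Fin p → ℝ) : D.co (v - w) = D.co v - D.co w := mulVec_sub _ _ _

theorem co_dot (v w : Fin p → ℝ) : D.co v ⬝ᵥ D.co w = v ⬝ᵥ w := by
  rw [co, dot_tr, co, mulVec_mulVec, D.hU', one_mulVec]

theorem co_vn (v : Fin p → ℝ) : vnorm (D.co v) = vnorm v := by
  rw [← sq_eq_sq₀ (vn_nonneg _) (vn_nonneg _), vn_sq, vn_sq, co_dot]

theorem co_gram (v w : Fin p → ℝ) :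
    (Aᵀ *ᵥ v) ⬝ᵥ (Aᵀ *ᵥ w) = ∑ l : Fin p, D.sv l ^ 2 * (D.co v l * D.co w l) := by
  rw [dot_tr, mulVec_mulVec, D.gram, ← mulVec_mulVec, ← mulVec_mulVec]
  rw [← transpose_transpose D.U, ← dot_tr]
  simp only [transpose_transpose, dotProduct, mulVec_diagonal]
  refine Finset.sum_congr rfl fun l _ => ?_
  simp only [co]; ring

theorem co_U (c : Fin p → ℝ) : D.co (D.U *ᵥ c) = c := by
  rw [co, mulVec_mulVec, D.hU, one_mulVec]

theorem projr_eq (U : Matrix (Fin p) (Fin p) ℝ) (r : ℕ) :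
    projr U r = U * diagonal (fun l : Fin p => if (l : ℕ) < r then (1:ℝ) else 0) * Uᵀ := by
  ext i j
  rw [mul_apply]
  simp only [projr, of_apply, mul_diagonal, transpose_apply]
  refine Finset.sum_congr rfl fun l _ => ?_
  split_ifs <;> simp

theorem co_proj (r : ℕ) (w : Fin p → ℝ) :
    D.co (projr D.U r *ᵥ w) = fun l : Fin p => if (l : ℕ) < r then D.co w l else 0 := by
  rw [projr_eq, ← mulVec_mulVec, ← mulVec_mulVec, co_U]
  ext l
  simp [mulVec_diagonal, co]

theorem proj_sq (r : ℕ) (w : Fin p → ℝ) :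
    vnorm (projr D.U r *ᵥ w) ^ 2 = ∑ l : Fin p, if (l : ℕ) < r then D.co w l ^ 2 else 0 := by
  rw [vn_sq, ← D.co_dot, co_proj, dotProduct]
  refine Finset.sum_congr rfl fun l _ => ?_
  split_ifs <;> simp [sq]

theorem proj_le (r : ℕ) (w : Fin p → ℝ) : vnorm (projr D.U r *ᵥ w) ≤ vnorm w := by
  rw [← sq_le_sq₀ (vn_nonneg _) (vn_nonneg _), proj_sq, vn_sq, ← D.co_dot, dotProduct]
  refine Finset.sum_le_sum fun l _ => ?_
  split_ifs <;> nlinarith [sq_nonneg (D.co w l)]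

theorem compl_le (r : ℕ) (w : Fin p → ℝ) : vnorm (w - projr D.U r *ᵥ w) ≤ vnorm w := by
  rw [← sq_le_sq₀ (vn_nonneg _) (vn_nonneg _), vn_sq, vn_sq, ← D.co_dot, ← D.co_dot w w,
    co_sub, co_proj, dotProduct, dotProduct]
  refine Finset.sum_le_sum fun l _ => ?_
  simp only [Pi.sub_apply]
  split_ifs <;> nlinarith [sq_nonneg (D.co w l)]

theorem compl_dot (r : ℕ) (v w : Fin p → ℝ) :
    (v - projr D.U r *ᵥ v) ⬝ᵥ w = (v - projr D.U r *ᵥ v) ⬝ᵥ (w - projr D.U r *ᵥ w) := by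
  rw [← D.co_dot, ← D.co_dot _ (w - _), co_sub, co_sub, co_proj, co_proj, dotProduct, dotProduct]
  refine Finset.sum_congr rfl fun l _ => ?_
  simp only [Pi.sub_apply]
  split_ifs <;> simp

theorem compl_gram (r : ℕ) (v w : Fin p → ℝ) :
    (Aᵀ *ᵥ (v - projr D.U r *ᵥ v)) ⬝ᵥ (Aᵀ *ᵥ w) =
    (Aᵀ *ᵥ (v - projr D.U r *ᵥ v)) ⬝ᵥ (Aᵀ *ᵥ (w - projr D.U r *ᵥ w)) := by
  rw [co_gram D, co_gram D, co_sub, co_sub, co_proj, co_proj]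
  refine Finset.sum_congr rfl fun l _ => ?_
  simp only [Pi.sub_apply]
  split_ifs <;> simp

theorem compl_tr_le (r : ℕ) (w : Fin p → ℝ) :
    vnorm (Aᵀ *ᵥ (w - projr D.U r *ᵥ w)) ≤ D.sv r * vnorm (w - projr D.U r *ᵥ w) := by
  have h0 := D.sv_nonneg r
  rw [← sq_le_sq₀ (vn_nonneg _) (mul_nonneg h0 (vn_nonneg _)), mul_pow, vn_sq, vn_sq,
    co_gram D, ← D.co_dot, dotProduct, Finset.mul_sum, co_sub, co_proj]
  refine Finset.sum_le_sum fun l _ => ?_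
  simp only [Pi.sub_apply]
  split_ifs with h
  · simp
  · have := D.sv_anti r l (by omega)
    have h2 := D.sv_nonneg l
    apply mul_le_mul_of_nonneg_right _ (mul_self_nonneg _)
    exact pow_le_pow_left₀ h2 this 2

/-- min-max lower half -/
theorem exists_vec (r : ℕ) (hr : r < p) (L : (Fin p → ℝ) →ₗ[ℝ] (Fin r → ℝ)) :
    ∃ w : Fin p → ℝ, 0 < vnorm w ∧ L w = 0 ∧ D.sv r * vnorm w ≤ vnorm (Aᵀ *ᵥ w) := by
  let ext : (Fin (r+1) → ℝ) →ₗ[ℝ] (Fin p → ℝ) :=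
    { toFun := fun c l => if h : (l : ℕ) < r + 1 then c ⟨l, h⟩ else 0
      map_add' := by intro a b; ext l; simp only [Pi.add_apply]; split_ifs <;> simp
      map_smul' := by intro a b; ext l; simp only [Pi.smul_apply]; split_ifs <;> simp }
  let F : (Fin (r+1) → ℝ) →ₗ[ℝ] (Fin r → ℝ) := L ∘ₗ (Matrix.toLin' D.U) ∘ₗ ext
  have hk : LinearMap.ker F ≠ ⊥ := LinearMap.ker_ne_bot_of_finrank_lt (by simp)
  obtain ⟨c, hc, hc0⟩ := (Submodule.ne_bot_iff _).1 hk
  have hco : D.co (D.U *ᵥ ext c) = ext c := D.co_U _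
  refine ⟨D.U *ᵥ ext c, ?_, ?_, ?_⟩
  · rw [← D.co_vn, hco]
    refine lt_of_le_of_ne (vn_nonneg _) fun h => hc0 ?_
    have h2 : ext c ⬝ᵥ ext c = 0 := by rw [← vn_sq, ← h]; simp
    have h3 := dotProduct_self_eq_zero.1 h2
    ext j
    have := congrFun h3 ⟨j, by omega⟩
    have hj : (j : ℕ) < r + 1 := j.2
    simp only [ext, LinearMap.coe_mk, AddHom.coe_mk, hj, dite_true, Pi.zero_apply] at this
    exact this
  · simpa [F] using hc
  · rw [← sq_le_sq₀ (mul_nonneg (D.sv_nonneg r) (vn_nonneg _)) (vn_nonneg _), mul_pow, vn_sq, vn_sq,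
      co_gram D, ← D.co_dot, hco, dotProduct, Finset.mul_sum]
    refine Finset.sum_le_sum fun l _ => ?_
    by_cases h : (l : ℕ) < r + 1
    · exact mul_le_mul_of_nonneg_right
        (pow_le_pow_left₀ (D.sv_nonneg r) (D.sv_anti l r (by omega)) 2) (mul_self_nonneg _)
    · simp only [ext, LinearMap.coe_mk, AddHom.coe_mk, h, dite_false]; simp

/-- Bessel -/
theorem bessel (r : ℕ) (h0 : ∀ l : ℕ, l < r → 0 < D.sv l) (q : Fin n → ℝ) :
    (∑ l : Fin p, if (l : ℕ) < r then (D.co (A *ᵥ q) l / D.sv l) ^ 2 else 0) ≤ vnorm q ^ 2 := by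
  set S := ∑ l : Fin p, if (l : ℕ) < r then (D.co (A *ᵥ q) l / D.sv l) ^ 2 else 0 with hS
  have hS0 : 0 ≤ S := Finset.sum_nonneg fun l _ => by split_ifs <;> positivity
  set d : Fin p → ℝ := fun l => if (l : ℕ) < r then D.co (A *ᵥ q) l / D.sv l ^ 2 else 0 with hd
  set g := D.U *ᵥ d with hg
  have hcg : D.co g = d := D.co_U _
  have h1 : g ⬝ᵥ (A *ᵥ q) = S := by
    rw [← D.co_dot, hcg, dotProduct, hS]
    refine Finset.sum_congr rfl fun l _ => ?_
    simp only [hd]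
    split_ifs with h
    · have := h0 l h; field_simp
    · simp
  have h2 : vnorm (Aᵀ *ᵥ g) ^ 2 = S := by
    rw [vn_sq, co_gram D, hcg, hS]
    refine Finset.sum_congr rfl fun l _ => ?_
    simp only [hd]
    split_ifs with h
    · have := h0 l h; field_simp
    · simp
  have h3 : S ≤ vnorm (Aᵀ *ᵥ g) * vnorm q := by
    rw [← h1, ← dot_tr]; exact vn_cs _ _
  have h4 := vn_nonneg (Aᵀ *ᵥ g)
  have h5 := vn_nonneg q
  nlinarith [sq_nonneg (vnorm (Aᵀ *ᵥ g) - vnorm q)]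

/-- leftover part of the centers -/
theorem leftover {k : ℕ} (z : Fin n → Fin k) (θ : Fin k → Fin p → ℝ) (e : ℝ) (he : 0 ≤ e)
    (hE : ∀ x : Fin p → ℝ, vnorm ((fun j => θ (z j) ⬝ᵥ x) - Aᵀ *ᵥ x) ≤ e * vnorm x)
    (r : ℕ) (a : Fin k) (N : ℝ) (hN : 0 ≤ N)
    (hNa : N ≤ ((Finset.univ.filter fun i => z i = a).card : ℝ)) :
    Real.sqrt N * vnorm (θ a - projr D.U r *ᵥ θ a) ≤ D.sv r + e := by
  set x := θ a - projr D.U r *ᵥ θ a with hx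
  have hs := D.sv_nonneg r
  rcases (vn_nonneg x).eq_or_lt with h | h
  · rw [← h]; simp; positivity
  have h1 : vnorm (fun j => θ (z j) ⬝ᵥ x) ≤ (D.sv r + e) * vnorm x := by
    have := vn_add ((fun j => θ (z j) ⬝ᵥ x) - Aᵀ *ᵥ x) (Aᵀ *ᵥ x)
    rw [sub_add_cancel] at this
    have h3 := D.compl_tr_le r (θ a)
    have := hE x
    rw [← hx] at h3
    linarith
  have h2 : θ a ⬝ᵥ x = vnorm x ^ 2 := by
    rw [dotProduct_comm, hx, compl_dot, vn_sq]
  have h3 : N * (vnorm x ^ 2) ^ 2 ≤ vnorm (fun j => θ (z j) ⬝ᵥ x) ^ 2 := by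
    rw [vn_sq (fun j => θ (z j) ⬝ᵥ x), dotProduct, ← Finset.sum_filter_add_sum_filter_not _ (fun i => z i = a)]
    have : ∑ i ∈ Finset.univ.filter (fun i => z i = a), (θ (z i) ⬝ᵥ x) * (θ (z i) ⬝ᵥ x)
        = ((Finset.univ.filter fun i => z i = a).card : ℝ) * (vnorm x ^ 2) ^ 2 := by
      rw [← nsmul_eq_mul, ← Finset.sum_const]
      refine Finset.sum_congr rfl fun i hi => ?_
      rw [(Finset.mem_filter.1 hi).2, h2, sq (vnorm x ^ 2)]
    rw [this]
    have h5 : 0 ≤ ∑ i ∈ Finset.univ.filter (fun i => ¬ z i = a), (θ (z i) ⬝ᵥ x) * (θ (z i) ⬝ᵥ x) :=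
      Finset.sum_nonneg fun i _ => mul_self_nonneg _
    have h6 : 0 ≤ (vnorm x ^ 2) ^ 2 := by positivity
    nlinarith [mul_le_mul_of_nonneg_right hNa h6]
  have h4 : (Real.sqrt N * vnorm x * vnorm x) ^ 2 ≤ ((D.sv r + e) * vnorm x) ^ 2 := by
    calc (Real.sqrt N * vnorm x * vnorm x) ^ 2 = (Real.sqrt N) ^ 2 * (vnorm x ^ 2) ^ 2 := by ring
      _ = N * (vnorm x ^ 2) ^ 2 := by rw [Real.sq_sqrt hN]
      _ ≤ _ := h3
      _ ≤ _ := pow_le_pow_left₀ (vn_nonneg _) h1 2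
  have h5 := (sq_le_sq₀ (by positivity) (by positivity)).1 h4
  exact le_of_mul_le_mul_right h5 h

end SVDData

section partB
variable {p n : ℕ} {X : Matrix (Fin p) (Fin (n + 1)) ℝ}

theorem tr_succAbove (X : Matrix (Fin p) (Fin (n + 1)) ℝ) (i : Fin (n + 1)) (v w : Fin p → ℝ) :
    (Xᵀ *ᵥ v) ⬝ᵥ (Xᵀ *ᵥ w) = (v ⬝ᵥ fun b => X b i) * (w ⬝ᵥ fun b => X b i) +
      ((X.submatrix id i.succAbove)ᵀ *ᵥ v) ⬝ᵥ ((X.submatrix id i.succAbove)ᵀ *ᵥ w) := by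
  rw [dotProduct, Fin.sum_univ_succAbove _ i]
  congr 1
  rw [dotProduct_comm v, dotProduct_comm w]; rfl

theorem interlace (D : SVDData p (n + 1) X) (i : Fin (n + 1))
    (DY : SVDData p n (X.submatrix id i.succAbove)) (r : ℕ) : DY.sv r ≤ D.sv r := by
  by_cases hr : r < p
  swap
  · rw [DY.sv_zero r (by omega)]; exact D.sv_nonneg r
  let L : (Fin p → ℝ) →ₗ[ℝ] (Fin r → ℝ) :=
    { toFun := fun w l => D.co w ⟨l, by omega⟩
      map_add' := by intro a b; ext l; simp [D.co_add]
      map_smul' := by intro a b; ext l; simp [SVDData.co, mulVec_smul] }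
  obtain ⟨w, hw, hL, hle⟩ := DY.exists_vec r hr L
  have hW : projr D.U r *ᵥ w = 0 := by
    have h1 : vnorm (projr D.U r *ᵥ w) ^ 2 = 0 := by
      rw [D.proj_sq]
      refine Finset.sum_eq_zero fun l _ => ?_
      split_ifs with h
      · have : D.co w l = 0 := congrFun hL ⟨l, h⟩
        rw [this]; simp
      · rfl
    rw [vn_sq] at h1
    exact dotProduct_self_eq_zero.1 h1
  have h1 := D.compl_tr_le r w
  rw [hW, sub_zero] at h1
  have h2 : vnorm ((X.submatrix id i.succAbove)ᵀ *ᵥ w) ≤ vnorm (Xᵀ *ᵥ w) := by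
    rw [← sq_le_sq₀ (vn_nonneg _) (vn_nonneg _), vn_sq, vn_sq, tr_succAbove X i]
    nlinarith [mul_self_nonneg (w ⬝ᵥ fun b => X b i)]
  exact le_of_mul_le_mul_right (hle.trans (h2.trans h1)) hw

theorem sv_k_le (D : SVDData p (n + 1) X) {k : ℕ} (z : Fin (n + 1) → Fin k)
    (θ : Fin k → Fin p → ℝ) (e : ℝ) (he : 0 ≤ e)
    (hE : ∀ x : Fin p → ℝ, vnorm ((fun j => θ (z j) ⬝ᵥ x) - Xᵀ *ᵥ x) ≤ e * vnorm x) :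
    D.sv k ≤ e := by
  by_cases hr : k < p
  swap
  · rw [D.sv_zero k (by omega)]; exact he
  let L : (Fin p → ℝ) →ₗ[ℝ] (Fin k → ℝ) :=
    { toFun := fun w a => θ a ⬝ᵥ w
      map_add' := by intro a b; ext l; simp [dotProduct_add]
      map_smul' := by intro a b; ext l; simp [dotProduct_smul] }
  obtain ⟨w, hw, hL, hle⟩ := D.exists_vec k hr L
  have h1 := hE w
  have h2 : (fun j => θ (z j) ⬝ᵥ w) = (0 : Fin (n + 1) → ℝ) := by
    ext j; exact congrFun hL (z j)
  rw [h2, zero_sub, vn_neg] at h1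
  exact le_of_mul_le_mul_right (hle.trans h1) hw

theorem sv_r_le (s : ℕ → ℝ) (k r : ℕ) (T e : ℝ) (hT : 0 ≤ T) (hrk : r ≤ k) (hk : s k ≤ e)
    (hg : ∀ a, r < a → a ≤ k → s (a - 1) - s a < T) : s r ≤ k * T + e := by
  have h : ∀ j : ℕ, j ≤ k - r → s (k - j) ≤ j * T + e := by
    intro j
    induction j with
    | zero => intro _; simpa using hk
    | succ j ih =>
      intro hj
      have h1 := ih (by omega)
      have h2 := hg (k - j) (by omega) (by omega)
      have h3 : k - (j + 1) = k - j - 1 := by omega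
      rw [h3]; push_cast; linarith
  have h1 := h (k - r) le_rfl
  have h2 : k - (k - r) = r := by omega
  rw [h2] at h1
  have h3 : ((k - r : ℕ) : ℝ) ≤ k := by exact_mod_cast Nat.sub_le k r
  nlinarith

theorem loo_key (D : SVDData p (n + 1) X) (i : Fin (n + 1))
    (DY : SVDData p n (X.submatrix id i.succAbove)) (r : ℕ) (T e : ℝ) (hT : 0 < T)
    (hg : ∀ l : ℕ, l < r → T + D.sv r ≤ D.sv l)
    (hQ : vnorm ((fun b => X b i) - projr DY.U r *ᵥ (fun b => X b i)) ≤ T)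
    (ε : Fin p → ℝ) (hε : vnorm ε ≤ e) (q : Fin (n + 1) → ℝ) :
    vnorm (projr D.U r *ᵥ ε) ≤ vnorm (projr DY.U r *ᵥ ε) +
      e * (vnorm q + vnorm (projr D.U r *ᵥ ε) / T +
        vnorm ((fun b => X b i) - ε - X *ᵥ q) / T) := by
  set y : Fin p → ℝ := fun b => X b i with hy
  have hsr := D.sv_nonneg r
  have hpos : ∀ l : ℕ, l < r → 0 < D.sv l := fun l hl => by have := hg l hl; linarith
  have hTl : ∀ l : ℕ, l < r → T ≤ D.sv l := fun l hl => by have := hg l hl; linarith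
  have hM : ∀ l : Fin p, (l : ℕ) < r →
      vnorm (D.U *ᵥ (Pi.single l 1) - projr DY.U r *ᵥ (D.U *ᵥ (Pi.single l 1)))
        ≤ |D.co y l / D.sv l| := by
    intro l hl
    set u := D.U *ᵥ (Pi.single l (1:ℝ)) with hu
    set M := u - projr DY.U r *ᵥ u with hMd
    have hcu : D.co u = Pi.single l 1 := D.co_U _
    have h1 : M ⬝ᵥ u = vnorm M ^ 2 := by rw [vn_sq, hMd, DY.compl_dot]
    have h1' : M ⬝ᵥ u = D.co M l := by
      rw [← D.co_dot, hcu]; simp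
    have h2 : (Xᵀ *ᵥ M) ⬝ᵥ (Xᵀ *ᵥ u) = D.sv l ^ 2 * vnorm M ^ 2 := by
      rw [D.co_gram, hcu, ← h1, h1', Finset.sum_eq_single l]
      · simp
      · intro b _ hb; simp [hb]
      · simp
    have h3 := tr_succAbove X i M u
    have hMy : |M ⬝ᵥ y| ≤ vnorm M * T := by
      rw [hMd, DY.compl_dot]
      exact (vn_cs_abs _ _).trans (mul_le_mul_of_nonneg_left hQ (vn_nonneg _))
    have huy : u ⬝ᵥ y = D.co y l := by rw [← D.co_dot, hcu]; simp
    have h4 : ((X.submatrix id i.succAbove)ᵀ *ᵥ M) ⬝ᵥ ((X.submatrix id i.succAbove)ᵀ *ᵥ u)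
        ≤ D.sv r ^ 2 * vnorm M ^ 2 := by
      rw [hMd, DY.compl_gram, ← vn_sq, ← mul_pow]
      refine pow_le_pow_left₀ (vn_nonneg _) ?_ 2
      exact (DY.compl_tr_le r u).trans
        (mul_le_mul_of_nonneg_right (interlace D i DY r) (vn_nonneg _))
    rw [h2, huy] at h3
    have h5 : (M ⬝ᵥ y) * D.co y l ≤ vnorm M * T * |D.co y l| := by
      refine (le_abs_self _).trans ?_
      rw [abs_mul]
      exact mul_le_mul_of_nonneg_right hMy (abs_nonneg _)
    have hsl := hpos l hl
    have h6 : T * D.sv l ≤ D.sv l ^ 2 - D.sv r ^ 2 := by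
      have := hg l hl
      nlinarith
    rw [abs_div, abs_of_pos hsl, le_div_iff₀ hsl]
    rcases (vn_nonneg M).eq_or_lt with h | h
    · rw [← h]; simp
    have h7 : (T * D.sv l) * vnorm M ^ 2 ≤ vnorm M * T * |D.co y l| := by
      have := mul_le_mul_of_nonneg_right h6 (sq_nonneg (vnorm M))
      linarith
    have h8 : (vnorm M * D.sv l) * (vnorm M * T) ≤ |D.co y l| * (vnorm M * T) := by
      linarith
    exact le_of_mul_le_mul_right h8 (by positivity)
  let B : (Fin p → ℝ) → (Fin p → ℝ) := fun x l => if (l : ℕ) < r then D.co x l / D.sv l else 0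
  have hBsq : ∀ x, vnorm (B x) ^ 2 =
      ∑ l : Fin p, if (l : ℕ) < r then (D.co x l / D.sv l) ^ 2 else 0 := by
    intro x
    rw [vn_sq, dotProduct]
    refine Finset.sum_congr rfl fun l _ => ?_
    simp only [B]
    split_ifs <;> simp [sq]
  have hBadd : ∀ x x', B (x + x') = B x + B x' := by
    intro x x'
    ext l
    simp only [B, D.co_add, Pi.add_apply]
    split_ifs <;> ring
  have hBq : vnorm (B (X *ᵥ q)) ≤ vnorm q := by
    rw [← sq_le_sq₀ (vn_nonneg _) (vn_nonneg _), hBsq]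
    exact D.bessel r hpos q
  have hBW : ∀ x, vnorm (B x) ≤ vnorm (projr D.U r *ᵥ x) / T := by
    intro x
    rw [← sq_le_sq₀ (vn_nonneg _) (div_nonneg (vn_nonneg _) hT.le), hBsq, div_pow, D.proj_sq,
      Finset.sum_div]
    refine Finset.sum_le_sum fun l _ => ?_
    split_ifs with h
    · rw [div_pow]
      exact div_le_div_of_nonneg_left (sq_nonneg _) (by positivity)
        (pow_le_pow_left₀ hT.le (hTl l h) 2)
    · simp
  have hBy : vnorm (B y) ≤ vnorm q + vnorm (projr D.U r *ᵥ ε) / T + vnorm (y - ε - X *ᵥ q) / T := by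
    have h1 : y = X *ᵥ q + ε + (y - ε - X *ᵥ q) := by abel
    have h2 : vnorm (B y) ≤ vnorm (B (X *ᵥ q)) + vnorm (B ε) + vnorm (B (y - ε - X *ᵥ q)) := by
      conv_lhs => rw [h1, hBadd, hBadd]
      exact (vn_add _ _).trans (by linarith [vn_add (B (X *ᵥ q)) (B ε)])
    have h3 := hBW (y - ε - X *ᵥ q)
    have h4 : vnorm (projr D.U r *ᵥ (y - ε - X *ᵥ q)) / T ≤ vnorm (y - ε - X *ᵥ q) / T :=
      div_le_div_of_nonneg_right (D.proj_le _ _) hT.le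
    linarith [hBW ε]
  have he : 0 ≤ e := (vn_nonneg _).trans hε
  have hWQ : vnorm (projr D.U r *ᵥ (ε - projr DY.U r *ᵥ ε)) ≤ e * vnorm (B y) := by
    rw [← sq_le_sq₀ (vn_nonneg _) (mul_nonneg he (vn_nonneg _)), mul_pow, hBsq, D.proj_sq,
      Finset.mul_sum]
    refine Finset.sum_le_sum fun l _ => ?_
    split_ifs with h
    · have h1 := hM l h
      set u := D.U *ᵥ (Pi.single l (1:ℝ)) with hu
      have hcu : D.co u = Pi.single l 1 := D.co_U _
      have h2 : D.co (ε - projr DY.U r *ᵥ ε) l = (u - projr DY.U r *ᵥ u) ⬝ᵥ ε := by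
        rw [DY.compl_dot, dotProduct_comm, ← DY.compl_dot, dotProduct_comm, ← D.co_dot, hcu]
        simp
      rw [h2, ← mul_pow, sq_le_sq, abs_mul, abs_of_nonneg he, mul_comm]
      exact (vn_cs_abs _ _).trans (mul_le_mul h1 hε (vn_nonneg _) (abs_nonneg _))
    · simp
  have h1 : projr D.U r *ᵥ ε = projr D.U r *ᵥ (projr DY.U r *ᵥ ε) +
      projr D.U r *ᵥ (ε - projr DY.U r *ᵥ ε) := by
    rw [← mulVec_add]; congr 1; abel
  have h2 := vn_add (projr D.U r *ᵥ (projr DY.U r *ᵥ ε)) (projr D.U r *ᵥ (ε - projr DY.U r *ᵥ ε))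
  rw [← h1] at h2
  have h3 := D.proj_le r (projr DY.U r *ᵥ ε)
  have h4 := mul_le_mul_of_nonneg_left hBy he
  linarith

end partB

theorem kmeans_key {p N k : ℕ} (x : Fin N → Fin p → ℝ) (t : Fin k → Fin p → ℝ)
    (z zh : Fin N → Fin k) (c : Fin k → Fin p → ℝ) (φ : Equiv.Perm (Fin k))
    (hφ : ∀ σ : Equiv.Perm (Fin k), ((Finset.univ.filter fun i => zh i ≠ φ (z i)).card : ℝ) ≤
      ((Finset.univ.filter fun i => zh i ≠ σ (z i)).card : ℝ))
    (hK : ∀ (z' : Fin N → Fin k) (c' : Fin k → Fin p → ℝ),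
      ∑ i, vnorm (x i - c (zh i)) ^ 2 ≤ ∑ i, vnorm (x i - c' (z' i)) ^ 2)
    (m η G : ℝ) (hm0 : 0 < m) (hη : 0 < η) (hG : 4 * η ≤ G)
    (hm : ∀ a, m ≤ ((Finset.univ.filter fun i => z i = a).card : ℝ))
    (hF : 4 * ∑ i, vnorm (x i - t (z i)) ^ 2 ≤ η ^ 2 * m)
    (hsep : ∀ a b, a ≠ b → G ≤ vnorm (t a - t b)) (i : Fin N) (hi : zh i ≠ φ (z i)) :
    G - 2 * η ≤ 2 * vnorm (x i - t (z i)) := by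
  have hS : ∑ i, vnorm (c (zh i) - t (z i)) ^ 2 ≤ η ^ 2 * m := by
    have h1 : ∑ i, vnorm (c (zh i) - t (z i)) ^ 2 ≤
        ∑ i, (2 * vnorm (x i - c (zh i)) ^ 2 + 2 * vnorm (x i - t (z i)) ^ 2) := by
      refine Finset.sum_le_sum fun i _ => ?_
      have h1 := vn_tri (c (zh i)) (x i) (t (z i))
      rw [vn_sub_comm (c (zh i)) (x i)] at h1
      have h2 := vn_nonneg (c (zh i) - t (z i))
      nlinarith [sq_nonneg (vnorm (x i - c (zh i)) - vnorm (x i - t (z i)))]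
    rw [Finset.sum_add_distrib, ← Finset.mul_sum, ← Finset.mul_sum] at h1
    have h2 := hK z t
    linarith
  have hσ : ∀ a, ∃ b, vnorm (c b - t a) ≤ η := by
    intro a
    by_contra! hcon
    have hne : (Finset.univ.filter fun i => z i = a).Nonempty := by
      rw [← Finset.card_pos]
      have := hm a
      exact_mod_cast hm0.trans_le this
    have h1 : ∑ i ∈ Finset.univ.filter (fun i => z i = a), η ^ 2 <
        ∑ i ∈ Finset.univ.filter (fun i => z i = a), vnorm (c (zh i) - t (z i)) ^ 2 := by
      refine Finset.sum_lt_sum_of_nonempty hne fun j hj => ?_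
      rw [(Finset.mem_filter.1 hj).2]
      exact pow_lt_pow_left₀ (hcon _) hη.le two_ne_zero
    have h2 : ∑ i ∈ Finset.univ.filter (fun i => z i = a), vnorm (c (zh i) - t (z i)) ^ 2 ≤
        ∑ i, vnorm (c (zh i) - t (z i)) ^ 2 :=
      Finset.sum_le_sum_of_subset_of_nonneg (Finset.subset_univ _) fun _ _ _ => sq_nonneg _
    rw [Finset.sum_const, nsmul_eq_mul] at h1
    have h3 := mul_le_mul_of_nonneg_right (hm a) (sq_nonneg η)
    linarith
  choose s hs using hσ
  have hinj : Function.Injective s := by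
    intro a b hab
    by_contra hne
    have h1 := hsep a b hne
    have h2 := vn_tri (t a) (c (s a)) (t b)
    rw [vn_sub_comm (t a) (c (s a))] at h2
    have h3 := hs a
    have h4 := hs b
    rw [← hab] at h4
    linarith
  let σ : Equiv.Perm (Fin k) := Equiv.ofBijective s (Finite.injective_iff_bijective.1 hinj)
  have hσs : ∀ a, σ a = s a := fun a => rfl
  have hfar : ∀ a b, b ≠ σ a → ∃ a', a' ≠ a ∧ b = s a' := by
    intro a b hb
    obtain ⟨a', ha'⟩ := σ.surjective b
    refine ⟨a', ?_, ha'.symm⟩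
    rintro rfl
    exact hb ha'.symm
  have hcount : ((Finset.univ.filter fun i => zh i ≠ σ (z i)).card : ℝ) * 9 ≤ m := by
    have h1 : ∑ i ∈ Finset.univ.filter (fun i => zh i ≠ σ (z i)), 9 * η ^ 2 ≤
        ∑ i ∈ Finset.univ.filter (fun i => zh i ≠ σ (z i)), vnorm (c (zh i) - t (z i)) ^ 2 := by
      refine Finset.sum_le_sum fun j hj => ?_
      obtain ⟨a', ha', hb⟩ := hfar _ _ (Finset.mem_filter.1 hj).2
      rw [hb]
      have h1 := hsep a' (z j) ha'
      have h2 := vn_tri (t a') (c (s a')) (t (z j))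
      rw [vn_sub_comm (t a') (c (s a'))] at h2
      have h3 := hs a'
      have h4 : 3 * η ≤ vnorm (c (s a') - t (z j)) := by linarith
      nlinarith
    have h2 : ∑ i ∈ Finset.univ.filter (fun i => zh i ≠ σ (z i)), vnorm (c (zh i) - t (z i)) ^ 2 ≤
        ∑ i, vnorm (c (zh i) - t (z i)) ^ 2 :=
      Finset.sum_le_sum_of_subset_of_nonneg (Finset.subset_univ _) fun _ _ _ => sq_nonneg _
    rw [Finset.sum_const, nsmul_eq_mul] at h1
    have h3 : 0 < η ^ 2 := by positivity
    have h4 : ((Finset.univ.filter fun i => zh i ≠ σ (z i)).card : ℝ) * 9 * η ^ 2 ≤ m * η ^ 2 := by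
      linarith
    exact le_of_mul_le_mul_right h4 h3
  have hφσ : φ = σ := by
    by_contra hne
    obtain ⟨a, ha⟩ : ∃ a, φ a ≠ σ a := by
      by_contra! h
      exact hne (Equiv.ext h)
    have h1 : (Finset.univ.filter fun i => z i = a) ⊆
        (Finset.univ.filter fun i => zh i ≠ φ (z i)) ∪
        (Finset.univ.filter fun i => zh i ≠ σ (z i)) := by
      intro j hj
      have hj := (Finset.mem_filter.1 hj).2
      simp only [Finset.mem_union, Finset.mem_filter, Finset.mem_univ, true_and]
      by_contra! h
      rw [hj] at h
      exact ha (h.1.symm.trans h.2)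
    have h2 := (Finset.card_le_card h1).trans (Finset.card_union_le _ _)
    have h3 : ((Finset.univ.filter fun i => z i = a).card : ℝ) ≤
        ((Finset.univ.filter fun i => zh i ≠ φ (z i)).card : ℝ) +
        ((Finset.univ.filter fun i => zh i ≠ σ (z i)).card : ℝ) := by exact_mod_cast h2
    have h4 := hφ σ
    have h5 := hm a
    linarith
  rw [hφσ] at hi
  obtain ⟨b, hb, hzb⟩ := hfar _ _ hi
  have hopt : vnorm (x i - c (zh i)) ≤ vnorm (x i - c (s (z i))) := by
    have h1 := hK (Function.update zh i (s (z i))) c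
    rw [← Finset.add_sum_erase _ _ (Finset.mem_univ i),
      ← Finset.add_sum_erase _ _ (Finset.mem_univ i)] at h1
    have h2 : ∑ j ∈ Finset.univ.erase i, vnorm (x j - c (Function.update zh i (s (z i)) j)) ^ 2
        = ∑ j ∈ Finset.univ.erase i, vnorm (x j - c (zh j)) ^ 2 := by
      refine Finset.sum_congr rfl fun j hj => ?_
      rw [Function.update_of_ne (Finset.ne_of_mem_erase hj)]
    rw [h2, Function.update_self] at h1
    exact (sq_le_sq₀ (vn_nonneg _) (vn_nonneg _)).1 (by linarith)
  rw [hzb] at hopt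
  have h1 := vn_tri (x i) (t (z i)) (c (s (z i)))
  rw [vn_sub_comm (t (z i))] at h1
  have h2 := vn_tri (t b) (c (s b)) (t (z i))
  have h3 := vn_tri (c (s b)) (x i) (t (z i))
  rw [vn_sub_comm (t b) (c (s b))] at h2
  rw [vn_sub_comm (c (s b)) (x i)] at h3
  linarith [hs b, hs (z i), hsep b (z i) hb]

theorem frob_le {p n : ℕ} {X : Matrix (Fin p) (Fin n) ℝ} (D : SVDData p n X) (r : ℕ)
    (E : Matrix (Fin p) (Fin n) ℝ) (e : ℝ) (hE : ∀ x, vnorm (Eᵀ *ᵥ x) ≤ e * vnorm x) :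
    ∑ i, vnorm (projr D.U r *ᵥ fun b => E b i) ^ 2 ≤ r * e ^ 2 := by
  have h1 : ∀ l : Fin p, ∑ i, (D.co (fun b => E b i) l) ^ 2 ≤ e ^ 2 := by
    intro l
    have hu := hE (D.U *ᵥ Pi.single l 1)
    have hn : vnorm (D.U *ᵥ Pi.single l (1:ℝ)) = 1 := by
      rw [← D.co_vn, D.co_U, ← sq_eq_sq₀ (vn_nonneg _) zero_le_one, vn_sq]; simp
    rw [hn, mul_one] at hu
    have h2 := pow_le_pow_left₀ (vn_nonneg _) hu 2
    rw [vn_sq, dotProduct] at h2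
    refine le_trans (le_of_eq ?_) h2
    refine Finset.sum_congr rfl fun i _ => ?_
    have : (Eᵀ *ᵥ (D.U *ᵥ Pi.single l (1:ℝ))) i = D.co (fun b => E b i) l := by
      change (fun b => E b i) ⬝ᵥ (D.U *ᵥ Pi.single l (1:ℝ)) = _
      rw [← D.co_dot, D.co_U]; simp
    rw [this, sq]
  simp only [D.proj_sq]
  rw [Finset.sum_comm]
  calc ∑ l : Fin p, ∑ i, (if (l : ℕ) < r then D.co (fun b => E b i) l ^ 2 else 0)
      ≤ ∑ l : Fin p, (if (l : ℕ) < r then e ^ 2 else 0) := by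
        refine Finset.sum_le_sum fun l _ => ?_
        split_ifs with h
        · exact h1 l
        · simp
    _ = ((Finset.univ.filter fun l : Fin p => (l : ℕ) < r).card : ℝ) * e ^ 2 := by
        rw [← Finset.sum_filter, Finset.sum_const, nsmul_eq_mul]
    _ ≤ r * e ^ 2 := by
        refine mul_le_mul_of_nonneg_right ?_ (sq_nonneg e)
        have : (Finset.univ.filter fun l : Fin p => (l : ℕ) < r).card ≤ (Finset.range r).card := by
          refine Finset.card_le_card_of_injOn (fun l => (l : ℕ)) ?_ ?_
          · intro l hl; simpa using hl
          · intro a _ b _ h; exact Fin.ext h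
        rw [Finset.card_range] at this
        exact_mod_cast this

set_option maxHeartbeats 2000000 in
theorem det_key {p n k : ℕ} (z : Fin (n + 1) → Fin k) (θ : Fin k → Fin p → ℝ)
    (Pm : Matrix (Fin p) (Fin (n + 1)) ℝ) (hP : ∀ a j, Pm a j = θ (z j) a)
    (m : ℝ) (hm400 : 400 * (k : ℝ) ^ 3 ≤ m) (hk : 1 ≤ k)
    (hm : ∀ a, m ≤ ((Finset.univ.filter fun i => z i = a).card : ℝ))
    (T : ℝ) (X : Matrix (Fin p) (Fin (n + 1)) ℝ) (D : SVDData p (n + 1) X)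
    (i : Fin (n + 1)) (DY : SVDData p n (X.submatrix id i.succAbove)) (r : ℕ)
    (hr : r = (((Finset.Icc 1 k).filter fun a => T ≤ D.sv (a - 1) - D.sv a).sup id))
    (zh : Fin (n + 1) → Fin k) (c : Fin k → Fin p → ℝ)
    (hK : IsKMeans (projr D.U r) X zh c) (φ : Equiv.Perm (Fin k))
    (hφ : ∀ σ : Equiv.Perm (Fin k), ((Finset.univ.filter fun i => zh i ≠ φ (z i)).card : ℝ) ≤
      ((Finset.univ.filter fun i => zh i ≠ σ (z i)).card : ℝ))
    (e ψ ρ Dl : ℝ) (he : 0 < e) (hee : e = opnorm (X - Pm))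
    (hDl : ∀ a b, a ≠ b → Dl ≤ vnorm (θ a - θ b))
    (hψ : ψ * (k * √k * e) = Dl * √m) (hT : T = ρ * e) (hρ : 256 < ρ) (hρψ : ρ < ψ / 64)
    (hi : zh i ≠ φ (z i)) :
    (1 - 3 * (ρ * ψ⁻¹ + ρ⁻¹)) * Dl ≤
      2 * vnorm ((projr DY.U r).mulVec fun a => (X - Pm) a i) := by
  have hkR : (1 : ℝ) ≤ k := by exact_mod_cast hk
  have hk2 : (1 : ℝ) ≤ (k : ℝ) ^ 2 := one_le_pow₀ hkR
  have hk3 : (k : ℝ) ^ 2 ≤ (k : ℝ) ^ 3 := pow_le_pow_right₀ hkR (by norm_num)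
  have hm0 : 0 < m := by linarith
  have hsm : 0 < √m := Real.sqrt_pos.2 hm0
  have hTpos : 0 < T := by rw [hT]; positivity
  have hTe : 256 * e ≤ T := by rw [hT]; nlinarith
  have hψ0 : 0 < ψ := by linarith
  have hEt : ∀ x, vnorm ((X - Pm)ᵀ *ᵥ x) ≤ e * vnorm x := by rw [hee]; exact opn_tr _
  have hEm : ∀ x, vnorm ((X - Pm) *ᵥ x) ≤ e * vnorm x := by rw [hee]; exact opn_le _
  have hPx : ∀ x : Fin p → ℝ, (fun j => θ (z j) ⬝ᵥ x) - Xᵀ *ᵥ x = -((X - Pm)ᵀ *ᵥ x) := by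
    intro x
    rw [transpose_sub, sub_mulVec, neg_sub]
    congr 1
    ext j
    simp only [mulVec, dotProduct, transpose_apply, hP]
  have hE : ∀ x : Fin p → ℝ, vnorm ((fun j => θ (z j) ⬝ᵥ x) - Xᵀ *ᵥ x) ≤ e * vnorm x := by
    intro x; rw [hPx, vn_neg]; exact hEt x
  have hEY : ∀ x : Fin p → ℝ, vnorm ((fun j => θ (z (i.succAbove j)) ⬝ᵥ x) -
      (X.submatrix id i.succAbove)ᵀ *ᵥ x) ≤ e * vnorm x := by
    intro x
    refine le_trans ?_ (hE x)
    rw [← sq_le_sq₀ (vn_nonneg _) (vn_nonneg _), vn_sq, vn_sq, dotProduct, dotProduct,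
      Fin.sum_univ_succAbove _ i]
    refine le_trans (le_of_eq ?_) (le_add_of_nonneg_left (mul_self_nonneg _))
    rfl
  -- rank selection
  have hrk : r ≤ k := by
    rw [hr]
    refine Finset.sup_le fun a ha => ?_
    exact (Finset.mem_Icc.1 (Finset.mem_filter.1 ha).1).2
  have hgap : ∀ a, r < a → a ≤ k → D.sv (a - 1) - D.sv a < T := by
    intro a ha hak
    by_contra! hcon
    have : a ≤ r := by
      rw [hr]
      exact Finset.le_sup (f := id) (Finset.mem_filter.2 ⟨Finset.mem_Icc.2 ⟨by omega, hak⟩, hcon⟩)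
    omega
  have hsvr : D.sv r ≤ k * T + e :=
    sv_r_le D.sv k r T e hTpos.le hrk (sv_k_le D z θ e he.le hE) hgap
  have hg : ∀ l : ℕ, l < r → T + D.sv r ≤ D.sv l := by
    intro l hl
    have hne : ((Finset.Icc 1 k).filter fun a => T ≤ D.sv (a - 1) - D.sv a).Nonempty := by
      by_contra h
      rw [Finset.not_nonempty_iff_eq_empty] at h
      rw [h] at hr
      simp at hr
      omega
    obtain ⟨a, ha, hae⟩ := Finset.exists_mem_eq_sup _ hne id
    have har : a = r := by rw [hr, hae]; rfl
    have h1 := (Finset.mem_filter.1 ha).2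
    rw [har] at h1
    have h2 := D.sv_anti l (r - 1) (by omega)
    linarith
  set ε : Fin p → ℝ := fun a => (X - Pm) a i with hεd
  set s := e / √m with hs
  have hs0 : 0 < s := by positivity
  have hε : vnorm ε ≤ e := by
    have h1 := hEm (Pi.single i 1)
    have hn : vnorm (Pi.single i (1:ℝ)) = 1 := by
      rw [← sq_eq_sq₀ (vn_nonneg _) zero_le_one, vn_sq]; simp
    rw [hn, mul_one, mulVec_single_one] at h1
    exact h1
  have hXi : ∀ j, (fun b => X b j) = θ (z j) + fun b => (X - Pm) b j := by
    intro j; ext b; simp [hP]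
  -- Q perp
  have hQ : vnorm ((fun b => X b i) - projr DY.U r *ᵥ (fun b => X b i)) ≤ T := by
    have h1 := DY.leftover (fun j => z (i.succAbove j)) θ e he.le hEY r (z i) (16 * (k:ℝ) ^ 2)
      (by positivity) (by
        have h2 := hm (z i)
        have h3 : (Finset.univ.filter fun j => z j = z i).card ≤
            (Finset.univ.filter fun j => z (i.succAbove j) = z i).card + 1 := by
          have h4 : (Finset.univ.filter fun j => z j = z i) ⊆
              insert i ((Finset.univ.filter fun j => z (i.succAbove j) = z i).image i.succAbove) := by
            intro j hj
            rw [Finset.mem_insert]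
            by_cases hji : j = i
            · exact Or.inl hji
            · right
              obtain ⟨j', rfl⟩ := Fin.exists_succAbove_eq hji
              refine Finset.mem_image_of_mem _ ?_
              simpa using hj
          refine (Finset.card_le_card h4).trans ((Finset.card_insert_le _ _).trans ?_)
          exact Nat.succ_le_succ Finset.card_image_le
        have h5 : ((Finset.univ.filter fun j => z j = z i).card : ℝ) ≤
            ((Finset.univ.filter fun j => z (i.succAbove j) = z i).card : ℝ) + 1 := by
          exact_mod_cast h3
        linarith)
    have h2 : √(16 * (k:ℝ) ^ 2) = 4 * k := by
      rw [show 16 * (k:ℝ) ^ 2 = (4 * k) ^ 2 by ring, Real.sqrt_sq (by positivity)]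
    rw [h2] at h1
    have h3 := interlace D i DY r
    have h4 : vnorm (θ (z i) - projr DY.U r *ᵥ θ (z i)) ≤ T / 2 := by
      have h5 : 4 * (k:ℝ) * vnorm (θ (z i) - projr DY.U r *ᵥ θ (z i)) ≤ 4 * (k:ℝ) * (T / 2) := by
        nlinarith
      exact le_of_mul_le_mul_left h5 (by positivity)
    have h5 := DY.compl_le r ε
    rw [hXi i, mulVec_add, add_sub_add_comm]
    refine (vn_add _ _).trans ?_
    linarith
  -- leave one out
  obtain ⟨q, hq1, hq2⟩ : ∃ q : Fin (n + 1) → ℝ, vnorm q ≤ 1 / √m ∧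
      Pm *ᵥ q = θ (z i) := by
    set Na : ℝ := ((Finset.univ.filter fun j => z j = z i).card : ℝ) with hNa
    have hNm : m ≤ Na := hm (z i)
    have hN0 : 0 < Na := hm0.trans_le hNm
    refine ⟨fun j => if z j = z i then 1 / Na else 0, ?_, ?_⟩
    · rw [← sq_le_sq₀ (vn_nonneg _) (by positivity), vn_sq, dotProduct, div_pow,
        Real.sq_sqrt hm0.le]
      have : ∀ j, (if z j = z i then 1 / Na else 0) * (if z j = z i then 1 / Na else 0) =
          if z j = z i then (1 / Na) * (1 / Na) else 0 := by
        intro j; split_ifs <;> simp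
      simp only [this]
      rw [← Finset.sum_filter, Finset.sum_const, nsmul_eq_mul, ← hNa]
      have : Na * (1 / Na * (1 / Na)) = 1 / Na := by field_simp
      rw [this, one_pow]
      exact one_div_le_one_div_of_le hm0 hNm
    · ext b
      simp only [mulVec, dotProduct, hP]
      have : ∀ j, θ (z j) b * (if z j = z i then 1 / Na else 0) =
          if z j = z i then θ (z i) b * (1 / Na) else 0 := by
        intro j; split_ifs with h
        · rw [h]
        · simp
      simp only [this]
      rw [← Finset.sum_filter, Finset.sum_const, nsmul_eq_mul, ← hNa]
      field_simp
  have hkey := loo_key D i DY r T e hTpos hg hQ ε hε q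
  have hrest : vnorm ((fun b => X b i) - ε - X *ᵥ q) ≤ s := by
    have h1 : (fun b => X b i) - ε - X *ᵥ q = -((X - Pm) *ᵥ q) := by
      rw [hXi i, sub_mulVec, hq2]; simp only [hεd]; abel
    rw [h1, vn_neg]
    refine (hEm q).trans ?_
    rw [hs, div_eq_mul_one_div]
    exact mul_le_mul_of_nonneg_left hq1 he.le
  set w := vnorm (projr D.U r *ᵥ ε) with hw
  set Qn := vnorm (projr DY.U r *ᵥ ε) with hQn
  have hw0 : 0 ≤ w := vn_nonneg _
  have hρ0 : 0 < ρ := by linarith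
  have hfin : w ≤ Qn + w / ρ + 2 * s := by
    have h1 : e * vnorm q ≤ s := by
      rw [hs, div_eq_mul_one_div e]
      exact mul_le_mul_of_nonneg_left hq1 he.le
    have h2 : e * (w / T) = w / ρ := by rw [hT]; field_simp
    have h3 : e * (vnorm ((fun b => X b i) - ε - X *ᵥ q) / T) ≤ s := by
      have h4 : e * (vnorm ((fun b => X b i) - ε - X *ᵥ q) / T) =
        vnorm ((fun b => X b i) - ε - X *ᵥ q) / ρ := by rw [hT]; field_simp
      rw [h4, div_le_iff₀ hρ0]
      nlinarith
    have h5 := hkey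
    rw [mul_add, mul_add, h2] at h5
    linarith
  -- k-means
  set d := Dl / ψ with hd
  have hsd : k * √k * s = d := by
    rw [hs, hd, eq_div_iff hψ0.ne']
    field_simp
    linarith
  have hsk : 1 ≤ √(k:ℝ) := Real.one_le_sqrt.2 hkR
  have hd1 : k * s ≤ d := by rw [← hsd]; nlinarith [mul_pos (show (0:ℝ) < k by linarith) hs0]
  have hd2 : √k * s ≤ d := by rw [← hsd]; nlinarith [mul_pos (show (0:ℝ) < √k by linarith) hs0]
  have hd3 : s ≤ d := by nlinarith
  have hDd : Dl = ψ * d := by rw [hd]; field_simp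
  have hd0 : 0 < d := hs0.trans_le hd3
  have hleft : ∀ a, vnorm (θ a - projr D.U r *ᵥ θ a) ≤ (ρ + 2) * d := by
    intro a
    have h1 := D.leftover z θ e he.le hE r a m hm0.le (hm a)
    have h2 : vnorm (θ a - projr D.U r *ᵥ θ a) ≤ (k * T + 2 * e) / √m := by
      rw [le_div_iff₀ hsm]; linarith
    have h3 : (k * T + 2 * e) / √m = ρ * (k * s) + 2 * s := by
      rw [hT, hs]; field_simp
    rw [h3] at h2
    nlinarith
  have hsep : ∀ a b, a ≠ b → Dl - 2 * ((ρ + 2) * d) ≤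
      vnorm (projr D.U r *ᵥ θ a - projr D.U r *ᵥ θ b) := by
    intro a b hab
    have h1 := hDl a b hab
    have h2 := vn_tri (θ a) (projr D.U r *ᵥ θ a) (θ b)
    have h3 := vn_tri (projr D.U r *ᵥ θ a) (projr D.U r *ᵥ θ b) (θ b)
    rw [vn_sub_comm (projr D.U r *ᵥ θ b) (θ b)] at h3
    linarith [hleft a, hleft b]
  have hx : ∀ j, projr D.U r *ᵥ (fun b => X b j) - projr D.U r *ᵥ θ (z j) =
      projr D.U r *ᵥ (fun b => (X - Pm) b j) := by
    intro j
    rw [hXi j, mulVec_add]; abel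
  have hFr := frob_le D r (X - Pm) e hEt
  have hη : (2 * (√k * s)) ^ 2 * m = 4 * (k * e ^ 2) := by
    have h1 : s * √m = e := by rw [hs]; field_simp
    calc (2 * (√k * s)) ^ 2 * m = 4 * ((√k) ^ 2 * s ^ 2 * (√m) ^ 2) := by
          rw [Real.sq_sqrt hm0.le]; ring
      _ = 4 * (k * (s * √m) ^ 2) := by
          rw [Real.sq_sqrt (by positivity : (0:ℝ) ≤ k)]; ring
      _ = _ := by rw [h1]
  have hmain := kmeans_key (fun j => projr D.U r *ᵥ (fun b => X b j))
    (fun a => projr D.U r *ᵥ θ a) z zh c φ hφ (by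
      intro z' c'
      have := hK z' c'
      have hh : ∀ v : Fin p → ℝ, vnorm v ^ 2 = ∑ a, v a ^ 2 := fun v => by
        rw [vnorm, Real.sq_sqrt (Finset.sum_nonneg fun i _ => sq_nonneg _)]
      simp only [hh, Pi.sub_apply]
      exact this) m (2 * (√k * s)) (Dl - 2 * ((ρ + 2) * d)) hm0 (by positivity) (by
      rw [hDd]; nlinarith) hm (by
      rw [hη]
      simp only [hx]
      have hrR : (r : ℝ) ≤ k := by exact_mod_cast hrk
      nlinarith [mul_le_mul_of_nonneg_right hrR (sq_nonneg e)]) hsep i hi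
  simp only [hx] at hmain
  change _ ≤ 2 * w at hmain
  have h1 : Dl - (2 * ρ + 8) * d ≤ 2 * w := by linarith
  have hri : ρ⁻¹ ≤ 1 := inv_le_one_of_one_le₀ (by linarith)
  have hri0 : 0 < ρ⁻¹ := by positivity
  have h2 : w * (1 - ρ⁻¹) ≤ Qn + 2 * s := by
    rw [div_eq_mul_inv] at hfin; linarith
  have h3 : (Dl - (2 * ρ + 8) * d) * (1 - ρ⁻¹) ≤ 2 * w * (1 - ρ⁻¹) :=
    mul_le_mul_of_nonneg_right h1 (by linarith)
  have h4 : ψ⁻¹ * Dl = d := by rw [hd]; field_simp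
  have h5 : (1 - 3 * (ρ * ψ⁻¹ + ρ⁻¹)) * Dl = Dl - 3 * ρ * d - 3 * (ρ⁻¹ * Dl) := by
    rw [← h4]; ring
  rw [h5]
  have h6 : 0 ≤ ρ⁻¹ * Dl := by rw [hDd]; positivity
  have h7 : 0 ≤ (2 * ρ + 8) * d * ρ⁻¹ := by positivity
  have h8 : 256 * d ≤ ρ * d := by nlinarith
  have h9 : (Dl - (2 * ρ + 8) * d) * (1 - ρ⁻¹) =
    Dl - ρ⁻¹ * Dl - 2 * (ρ * d) - 8 * d + (2 * ρ + 8) * d * ρ⁻¹ := by ring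
  change _ ≤ 2 * Qn
  linarith

/-- **Lemma 3 (entrywise decomposition for adaptive spectral clustering).**
`r̂ := max{a ∈ [k] : λ̂_a − λ̂_{a+1} ≥ T}`.  There are universal constants `C, C' > 0`
such that if `βn/k⁴ ≥ 400`, `256 < ρ̃ := T/‖E‖ < ψ̃₀/64` and `ψ̃₀ > C` (for every
realization), where `ψ̃₀ := Δ/(β^{-1/2}k²n^{-1/2}‖E‖)`, then for every `ω` and `i`,
`𝟙{z̃_i ≠ φ(z*_i)} ≤ 𝟙{(1 − C'(ρ̃ψ̃₀⁻¹ + ρ̃⁻¹))Δ ≤ 2‖Û_{−i,1:r̂}Û_{−i,1:r̂}ᵀ ε_i‖}`;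
consequently `E ℓ(z̃,z*) ≤ n⁻¹ Σ_i E 𝟙{(1 − C'(ρ̃ψ̃₀⁻¹ + ρ̃⁻¹))Δ ≤ 2‖Û_{−i,1:r̂}Û_{−i,1:r̂}ᵀ ε_i‖}`. -/
theorem adaptive_entrywise_decomposition :
    ∃ C C' : ℝ, 0 < C ∧ 0 < C' ∧
      ∀ (Ω : Type) (mΩ : MeasurableSpace Ω) (μ : Measure Ω), IsProbabilityMeasure μ →
      ∀ (p n k : ℕ) (z : Fin (n + 1) → Fin k) (θ : Fin k → Fin p → ℝ)
        (Pm : Matrix (Fin p) (Fin (n + 1)) ℝ), (∀ a j, Pm a j = θ (z j) a) →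
      400 ≤ betaMin (n + 1) k z * ((n : ℝ) + 1) / (k : ℝ) ^ 4 →
      ∀ (T : ℝ) (X : Ω → Matrix (Fin p) (Fin (n + 1)) ℝ)
        (DX : ∀ ω, SVDData p (n + 1) (X ω))
        (DXi : ∀ ω (i : Fin (n + 1)), SVDData p n ((X ω).submatrix id i.succAbove))
        (rh : Ω → ℕ),
        (∀ ω, rh ω =
          (((Finset.Icc 1 k).filter fun a => T ≤ (DX ω).sv (a - 1) - (DX ω).sv a).sup id)) →
      ∀ (zh : Ω → Fin (n + 1) → Fin k) (c : Ω → Fin k → Fin p → ℝ),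
        (∀ ω, IsKMeans (projr (DX ω).U (rh ω)) (X ω) (zh ω) (c ω)) →
      ∀ φ : Ω → Equiv.Perm (Fin k),
        (∀ ω, miscl (zh ω) z =
          ((Finset.univ.filter fun i => zh ω i ≠ (φ ω) (z i)).card : ℝ) / ((n : ℝ) + 1)) →
      ∀ ψ0 ρT : Ω → ℝ,
        (∀ ω, ψ0 ω = Delta θ / ((Real.sqrt (betaMin (n + 1) k z))⁻¹ * (k : ℝ) ^ 2 *
            (Real.sqrt ((n : ℝ) + 1))⁻¹ * opnorm (X ω - Pm))) →
        (∀ ω, ρT ω = T / opnorm (X ω - Pm)) →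
        (∀ ω, 256 < ρT ω) → (∀ ω, ρT ω < ψ0 ω / 64) → (∀ ω, C < ψ0 ω) →
        (∀ ω i, zh ω i ≠ (φ ω) (z i) →
          (1 - C' * (ρT ω * (ψ0 ω)⁻¹ + (ρT ω)⁻¹)) * Delta θ ≤
            2 * vnorm ((projr (DXi ω i).U (rh ω)).mulVec fun a => (X ω - Pm) a i)) ∧
        ∫⁻ ω, ENNReal.ofReal (miscl (zh ω) z) ∂μ ≤
          ((n : ℝ≥0∞) + 1)⁻¹ * ∑ i : Fin (n + 1),
            μ {ω | (1 - C' * (ρT ω * (ψ0 ω)⁻¹ + (ρT ω)⁻¹)) * Delta θ ≤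
              2 * vnorm ((projr (DXi ω i).U (rh ω)).mulVec fun a => (X ω - Pm) a i)} := by
  refine ⟨1, 3, one_pos, by norm_num, ?_⟩
  intro Ω mΩ μ hμ p n k z θ Pm hP hβ T X DX DXi rh hrh zh c hK φ hφ ψ0 ρT hψ hρ h256 h64 hC
  have hpt : ∀ ω i, zh ω i ≠ (φ ω) (z i) →
      (1 - 3 * (ρT ω * (ψ0 ω)⁻¹ + (ρT ω)⁻¹)) * Delta θ ≤
        2 * vnorm ((projr (DXi ω i).U (rh ω)).mulVec fun a => (X ω - Pm) a i) := by
    intro ω i hi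
    have hk : 1 ≤ k := by have := (z i).2; omega
    have hkR : (1 : ℝ) ≤ k := by exact_mod_cast hk
    have hk0 : (0 : ℝ) < k := by linarith
    have hn0 : (0 : ℝ) < (n : ℝ) + 1 := by positivity
    set m : ℝ := ⨅ a : Fin k, ((Finset.univ.filter fun i => z i = a).card : ℝ) with hm
    have hbm : betaMin (n + 1) k z = k / ((n : ℝ) + 1) * m := by
      rw [betaMin]; push_cast; rfl
    have hbm2 : betaMin (n + 1) k z * ((n : ℝ) + 1) = k * m := by
      rw [hbm]; field_simp
    have hma : ∀ a, m ≤ ((Finset.univ.filter fun i => z i = a).card : ℝ) := fun a =>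
      ciInf_le (Set.finite_range _).bddBelow a
    have hm400 : 400 * (k : ℝ) ^ 3 ≤ m := by
      rw [hbm2, le_div_iff₀ (by positivity)] at hβ
      have : k * (400 * (k : ℝ) ^ 3) ≤ k * m := by linarith
      exact le_of_mul_le_mul_left this hk0
    have hm0 : 0 < m := lt_of_lt_of_le (by positivity) hm400
    have he : 0 < opnorm (X ω - Pm) := by
      refine lt_of_le_of_ne (opn_nonneg _) fun h => ?_
      have h1 := hρ ω
      have h2 := h256 ω
      rw [← h, div_zero] at h1
      linarith
    set e := opnorm (X ω - Pm) with hee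
    have hT : T = ρT ω * e := by rw [hρ ω, ← hee]; field_simp
    have hψ' : ψ0 ω * (k * √k * e) = Delta θ * √m := by
      have h1 : √(betaMin (n + 1) k z) * √((n : ℝ) + 1) = √k * √m := by
        rw [← Real.sqrt_mul' _ hn0.le, hbm2, Real.sqrt_mul hk0.le]
      have hb0 : 0 < √(betaMin (n + 1) k z) := by
        rw [hbm]; exact Real.sqrt_pos.2 (by positivity)
      have hn1 : 0 < √((n : ℝ) + 1) := Real.sqrt_pos.2 hn0
      have hsk : 0 < √(k : ℝ) := Real.sqrt_pos.2 hk0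
      have h2 : ψ0 ω * ((k : ℝ) ^ 2 * e) = Delta θ * (√k * √m) := by
        rw [hψ ω, ← h1, ← hee]; field_simp
      have h3 : (k : ℝ) = √k * √k := (Real.mul_self_sqrt hk0.le).symm
      have h4 : √k * (ψ0 ω * (k * √k * e)) = √k * (Delta θ * √m) := by
        calc √k * (ψ0 ω * (k * √k * e)) = ψ0 ω * (k * (√k * √k) * e) := by ring
          _ = ψ0 ω * ((k : ℝ) ^ 2 * e) := by rw [← h3]; ring
          _ = _ := by rw [h2]; ring
      exact mul_left_cancel₀ hsk.ne' h4
    have hDl : ∀ a b, a ≠ b → Delta θ ≤ vnorm (θ a - θ b) := by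
      intro a b hab
      exact ciInf_le (f := fun q : {q : Fin k × Fin k // q.1 ≠ q.2} =>
        vnorm (fun i => θ q.1.1 i - θ q.1.2 i)) (Set.finite_range _).bddBelow ⟨(a, b), hab⟩
    have hφ' : ∀ σ : Equiv.Perm (Fin k),
        ((Finset.univ.filter fun i => zh ω i ≠ φ ω (z i)).card : ℝ) ≤
        ((Finset.univ.filter fun i => zh ω i ≠ σ (z i)).card : ℝ) := by
      intro σ
      have h1 := hφ ω
      rw [miscl] at h1
      push_cast at h1
      rw [div_left_inj' hn0.ne'] at h1
      rw [← h1]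
      exact ciInf_le (f := fun σ : Equiv.Perm (Fin k) =>
        ((Finset.univ.filter fun i => zh ω i ≠ σ (z i)).card : ℝ)) (Set.finite_range _).bddBelow σ
    exact det_key z θ Pm hP m hm400 hk hma T (X ω) (DX ω) i (DXi ω i) (rh ω) (hrh ω) (zh ω) (c ω)
      (hK ω) (φ ω) hφ' e (ψ0 ω) (ρT ω) (Delta θ) he hee hDl hψ' hT (h256 ω) (h64 ω) hi
  refine ⟨hpt, ?_⟩
  set S : Fin (n + 1) → Set Ω := fun i =>
    {ω | (1 - 3 * (ρT ω * (ψ0 ω)⁻¹ + (ρT ω)⁻¹)) * Delta θ ≤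
      2 * vnorm ((projr (DXi ω i).U (rh ω)).mulVec fun a => (X ω - Pm) a i)} with hS
  have hb : ∀ ω, ENNReal.ofReal (miscl (zh ω) z) ≤
      ((n : ℝ≥0∞) + 1)⁻¹ * ∑ i : Fin (n + 1), (toMeasurable μ (S i)).indicator 1 ω := by
    intro ω
    rw [hφ ω, ENNReal.ofReal_div_of_pos (by positivity), ENNReal.ofReal_natCast,
      ENNReal.div_eq_inv_mul, ENNReal.ofReal_add (by positivity) zero_le_one,
      ENNReal.ofReal_natCast, ENNReal.ofReal_one]
    gcongr
    rw [Finset.card_filter, Nat.cast_sum]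
    refine Finset.sum_le_sum fun i _ => ?_
    split_ifs with h
    · rw [Set.indicator_of_mem (subset_toMeasurable μ _ (hpt ω i h))]; simp
    · simp
  calc ∫⁻ ω, ENNReal.ofReal (miscl (zh ω) z) ∂μ
      ≤ ∫⁻ ω, ((n : ℝ≥0∞) + 1)⁻¹ * ∑ i : Fin (n + 1), (toMeasurable μ (S i)).indicator 1 ω ∂μ :=
        lintegral_mono hb
    _ = ((n : ℝ≥0∞) + 1)⁻¹ * ∑ i : Fin (n + 1), μ (S i) := by
        have hmeas : ∀ i, Measurable ((toMeasurable μ (S i)).indicator (1 : Ω → ℝ≥0∞)) :=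
          fun i => measurable_one.indicator (measurableSet_toMeasurable μ (S i))
        rw [lintegral_const_mul _ (Finset.measurable_fun_sum _ fun i _ => hmeas i),
          lintegral_finsetSum _ fun i _ => hmeas i]
        congr 1
        refine Finset.sum_congr rfl fun i _ => ?_
        rw [lintegral_indicator_one (measurableSet_toMeasurable μ (S i)), measure_toMeasurable]
end
end
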